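/- Let D be a domain in ℝ^n, n ≥ 2, x_0 ∈ D, Q:D→(0,∞) a measurable function, p > n−1, and let f:D→ℝ^n be a lower Q-homeomorphism with respect to p-modulus at x_0. Then for all 0 < r_1 < r_2 < dist(x_0,∂D), the p/(p−n+1)-modulus of the family of curves joining f(S_1) and f(S_2) in f(D) satisfies M_{p/(p−n+1)}(Δ(fS_1, fS_2; fD)) ≤ (∫_{r_1}^{r_2} dr / ‖Q‖_{(n−1)/(p−n+1)}(r))^{−(n−1)/(p−n+1)}, where S_j = S(x_0,r_j), j = 1,2, and ‖Q‖_{(n−1)/(p−n+1)}(r) = (∫_{D∩S(x_0,r)} Q(x)^{(n−1)/(p−n+1)} dA)^{(p−n+1)/(n−1)}. -/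

import Mathlib

open MeasureTheory Metric Set Filter
open scoped ENNReal NNReal Topology RealInnerProductSpace Classical

noncomputable section

abbrev Eucl (n : ℕ) : Type := EuclideanSpace ℝ (Fin n)

/-- A `k`-dimensional surface in `ℝⁿ`: a continuous map defined on an open subset of the
one-point compactification of `ℝᵏ`. -/
structure Surface (n k : ℕ) where
  dom : Set (OnePoint (Eucl k))
  isOpen_dom : IsOpen dom
  toFun : OnePoint (Eucl k) → Eucl n
  continuousOn : ContinuousOn toFun dom

namespace Surface

variable {n k : ℕ}

/-- The multiplicity function `N(S,y)` of a surface. -/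
def mult (S : Surface n k) (y : Eucl n) : ℝ≥0∞ :=
  ((S.dom ∩ S.toFun ⁻¹' {y}).encard : ℕ∞)

/-- The integral `∫_S ρ dA = ∫ ρ(y) N(S,y) dH^k(y)` of `ρ` over the surface `S`. -/
def sint (S : Surface n k) (ρ : Eucl n → ℝ≥0∞) : ℝ≥0∞ :=
  ∫⁻ y, ρ y * S.mult y ∂(μH[(k : ℝ)] : Measure (Eucl n))

end Surface

/-- Admissible functions for a family of `k`-surfaces. -/
def surfAdm {n : ℕ} (k : ℕ) (Γ : Set (Surface n k)) : Set (Eucl n → ℝ≥0∞) :=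
  {ρ | Measurable ρ ∧ ∀ S ∈ Γ, 1 ≤ S.sint fun y => ρ y ^ k}

/-- The `p`-modulus of a family of `k`-surfaces. -/
def surfModulus {n : ℕ} (p : ℝ) (k : ℕ) (Γ : Set (Surface n k)) : ℝ≥0∞ :=
  ⨅ ρ ∈ surfAdm k Γ, ∫⁻ x, ρ x ^ p

/-- Extensively `p`-admissible functions: admissibility may fail on a subfamily of
`p`-modulus zero. -/
def extAdm {n : ℕ} (p : ℝ) (k : ℕ) (Γ : Set (Surface n k)) : Set (Eucl n → ℝ≥0∞) :=
  {ρ | Measurable ρ ∧ surfModulus p k {S ∈ Γ | ¬ 1 ≤ S.sint fun y => ρ y ^ k} = 0}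

/-- The family of the (injectively parametrized, nonempty) surfaces `S(x₀,r) ∩ D`,
`r ∈ I`. -/
def sphereFam {n : ℕ} (D : Set (Eucl n)) (x₀ : Eucl n) (I : Set ℝ) :
    Set (Surface n (n - 1)) :=
  {S | ∃ r ∈ I, S.dom.Nonempty ∧ Set.InjOn S.toFun S.dom ∧
      S.toFun '' S.dom = sphere x₀ r ∩ D}

/-- The image of a family of surfaces under a map `f`. -/
def imageFam {n k : ℕ} (f : Eucl n → Eucl n) (Γ : Set (Surface n k)) :
    Set (Surface n k) :=
  {S' | ∃ S ∈ Γ, S'.dom = S.dom ∧ Set.EqOn S'.toFun (f ∘ S.toFun) S.dom}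

/-- The spherical ring `R(x₀,a,b)`. -/
def ringA {n : ℕ} (x₀ : Eucl n) (a b : ℝ) : Set (Eucl n) :=
  {x | a < dist x x₀ ∧ dist x x₀ < b}

/-- `‖Q‖_α(r) = (∫_{D ∩ S(x₀,r)} Q^α dA)^{1/α}`. -/
def sphNorm {n : ℕ} (D : Set (Eucl n)) (x₀ : Eucl n) (Q : Eucl n → ℝ≥0∞)
    (α : ℝ) (r : ℝ) : ℝ≥0∞ :=
  (∫⁻ x in D ∩ sphere x₀ r, Q x ^ α ∂(μH[((n : ℝ) - 1)] : Measure (Eucl n))) ^ (1 / α)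

/-- `f` is a lower `Q`-homeomorphism w.r.t. the `p`-modulus at `x₀`. -/
def IsLowerQHomeoAt {n : ℕ} (D : Set (Eucl n)) (f : Eucl n → Eucl n)
    (Q : Eucl n → ℝ≥0∞) (p : ℝ) (x₀ : Eucl n) (d₀ : ℝ≥0∞) : Prop :=
  ∀ ε ε₀ : ℝ, 0 < ε → ε < ε₀ → ENNReal.ofReal ε₀ < d₀ →
    (⨅ ρ ∈ extAdm p (n - 1) (sphereFam D x₀ (Ioo ε ε₀)),
        ∫⁻ x in ringA x₀ ε ε₀, ρ x ^ p / Q x) ≤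
      surfModulus p (n - 1) (imageFam f (sphereFam D x₀ (Ioo ε ε₀)))

/-- `f` is a homeomorphism of `D` onto `D'`. -/
structure IsHomeoOn {n : ℕ} (f : Eucl n → Eucl n) (D D' : Set (Eucl n)) : Prop where
  continuousOn : ContinuousOn f D
  injOn : Set.InjOn f D
  image_eq : f '' D = D'
  isOpenMapOn : ∀ U : Set (Eucl n), U ⊆ D → IsOpen U → IsOpen (f '' U)

/-- `Df` is the weak (Sobolev) derivative of `f` on `D`, and `f ∈ W^{1,1}_loc(D)`. -/
def IsWeakDerivOn {n m : ℕ} (D : Set (Eucl n)) (f : Eucl n → Eucl m)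
    (Df : Eucl n → Eucl n →L[ℝ] Eucl m) : Prop :=
  LocallyIntegrableOn f D volume ∧ LocallyIntegrableOn Df D volume ∧
  ∀ ψ : Eucl n → ℝ, ContDiff ℝ (⊤ : ℕ∞) ψ → HasCompactSupport ψ → tsupport ψ ⊆ D →
    ∀ v : Eucl n, ∫ x, ψ x • Df x v = - ∫ x, fderiv ℝ ψ x v • f x

/-- The Frobenius norm `|∇f| = (Σ_{i,j} (∂f_i/∂x_j)²)^{1/2}` of a linear map. -/
def frobNorm {n m : ℕ} (A : Eucl n →L[ℝ] Eucl m) : ℝ :=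
  Real.sqrt (∑ i : Fin m, ∑ j : Fin n, (A (EuclideanSpace.single j 1) i) ^ 2)

/-- The Orlicz–Sobolev class `W^{1,φ}_loc(D)` (with explicit weak derivative `Df`). -/
def MemOrliczSobolevOn {n m : ℕ} (φ : ℝ → ℝ) (D : Set (Eucl n))
    (f : Eucl n → Eucl m) (Df : Eucl n → Eucl n →L[ℝ] Eucl m) : Prop :=
  IsWeakDerivOn D f Df ∧
  ∀ K : Set (Eucl n), K ⊆ D → IsCompact K →
    (∫⁻ x in K, ENNReal.ofReal (φ (frobNorm (Df x)))) < ⊤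

/-- `φ` is nondecreasing and positive on `(0,∞)`. -/
def NondecPos (φ : ℝ → ℝ) : Prop :=
  (∀ s t : ℝ, 0 < s → s ≤ t → φ s ≤ φ t) ∧ ∀ t : ℝ, 0 < t → 0 < φ t

/-- The Calderón-type condition `∫_{t₀}^∞ (t/φ(t))^{1/(n-2)} dt < ∞`. -/
def CalderonCond (n : ℕ) (φ : ℝ → ℝ) : Prop :=
  ∃ t₀ : ℝ, 0 < t₀ ∧
    IntegrableOn (fun t => (t / φ t) ^ (1 / ((n : ℝ) - 2))) (Ioi t₀) volume

/-- `f` (with a.e. derivative `Df`) has finite distortion on `D`. -/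
def HasFiniteDistortionOn {n : ℕ} (D : Set (Eucl n))
    (Df : Eucl n → Eucl n →L[ℝ] Eucl n) : Prop :=
  ∃ K : Eucl n → ℝ, AEMeasurable K (volume.restrict D) ∧
    ∀ᵐ x ∂volume.restrict D, 1 ≤ K x ∧ ‖Df x‖ ^ n ≤ K x * (Df x).det

/-- The distortion `K_p(x,f)` for a map with derivative `Df`. -/
def distortionKp {n : ℕ} (p : ℝ) (Df : Eucl n → Eucl n →L[ℝ] Eucl n)
    (x : Eucl n) : ℝ≥0∞ :=
  if (Df x).det ≠ 0 then ENNReal.ofReal (‖Df x‖ ^ p / (Df x).det)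
  else if Df x = 0 then 1 else ⊤

/-- The multiplicity function of a curve `γ : [0,1] → ℝⁿ`. -/
def curveMult {n : ℕ} (γ : ℝ → Eucl n) (y : Eucl n) : ℝ≥0∞ :=
  (({t ∈ Icc (0:ℝ) 1 | γ t = y}).encard : ℕ∞)

/-- The line integral `∫_γ ρ ds = ∫ ρ(y) N(γ,y) dH¹(y)`. -/
def curveInt {n : ℕ} (γ : ℝ → Eucl n) (ρ : Eucl n → ℝ≥0∞) : ℝ≥0∞ :=
  ∫⁻ y, ρ y * curveMult γ y ∂(μH[(1 : ℝ)] : Measure (Eucl n))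

/-- The family of curves joining `A` and `B` in `G`. -/
def curveJoin {n : ℕ} (A B G : Set (Eucl n)) : Set (ℝ → Eucl n) :=
  {γ | ContinuousOn γ (Icc 0 1) ∧ γ 0 ∈ A ∧ γ 1 ∈ B ∧ Set.MapsTo γ (Icc 0 1) G}

/-- The `q`-modulus of a family of curves. -/
def curveModulus {n : ℕ} (q : ℝ) (Γ : Set (ℝ → Eucl n)) : ℝ≥0∞ :=
  ⨅ ρ ∈ {ρ : Eucl n → ℝ≥0∞ | Measurable ρ ∧ ∀ γ ∈ Γ, 1 ≤ curveInt γ ρ},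
    ∫⁻ x, ρ x ^ q

/-- The `q`-capacity of the condenser `(A,C)`, via the modulus of joining curves. -/
def condenserCap {n : ℕ} (q : ℝ) (A C : Set (Eucl n)) : ℝ≥0∞ :=
  curveModulus q (curveJoin (frontier A) (frontier C) (A \ C))

/-- `L(x₀,f) = limsup_{x→x₀} |f(x)-f(x₀)|/|x-x₀|`. -/
def LAt {n : ℕ} (f : Eucl n → Eucl n) (x₀ : Eucl n) : ℝ≥0∞ :=
  limsup (fun x => edist (f x) (f x₀) / edist x x₀) (𝓝[≠] x₀)

/-- `k_p(x₀) = limsup_{ε→0} (⨍_{B(x₀,ε)} K_p(x,f)^{(n-1)/(p-n+1)} dm)^{(p-n+1)/(n-1)}`. -/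
def kpAt {n : ℕ} (p : ℝ) (Df : Eucl n → Eucl n →L[ℝ] Eucl n) (x₀ : Eucl n) : ℝ≥0∞ :=
  limsup (fun ε : ℝ =>
      ((∫⁻ x in ball x₀ ε, distortionKp p Df x ^ (((n:ℝ)-1)/(p-(n:ℝ)+1))) /
        volume (ball x₀ ε)) ^ ((p-(n:ℝ)+1)/((n:ℝ)-1)))
    (𝓝[>] (0:ℝ))

/-- `f` is absolutely continuous on `S` w.r.t. `d`-dimensional Hausdorff measure. -/
def ACOnSet {n m : ℕ} (f : Eucl n → Eucl m) (S : Set (Eucl n)) (d : ℝ) : Prop :=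
  ∀ ε : ℝ, 0 < ε → ∃ δ : ℝ, 0 < δ ∧ ∀ A : Set (Eucl n), A ⊆ S →
    (μH[d] : Measure (Eucl n)) A < ENNReal.ofReal δ →
      (μH[d] : Measure (Eucl m)) (f '' A) < ENNReal.ofReal ε

/-- `f` is locally absolutely continuous on `S` w.r.t. `H^d`. -/
def LocACOnSet {n m : ℕ} (f : Eucl n → Eucl m) (S : Set (Eucl n)) (d : ℝ) : Prop :=
  ∀ x ∈ S, ∃ V ∈ 𝓝 x, ACOnSet f (S ∩ V) d

/-- The Luzin (N)-property of `f` on `S` w.r.t. `d`-dimensional Hausdorff measure. -/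
def LusinNOn {n m : ℕ} (f : Eucl n → Eucl m) (S : Set (Eucl n)) (d : ℝ) : Prop :=
  ∀ A : Set (Eucl n), A ⊆ S → (μH[d] : Measure (Eucl n)) A = 0 →
    (μH[d] : Measure (Eucl m)) (f '' A) = 0

end

/-!
The images of the spheres between `S₁` and `S₂` separate `fS₁` from `fS₂`, on any compact range of
radii even after translating by vectors of length less than some fixed `ε`. A polygon inscribed in
a curve from `fS₁` to `fS₂` is therefore hit by a separating surface `S` after each translation by
such a vector, whereas the translations making a segment hit `S` have measure at most its length
times the area of `S` (a Crofton inequality). This bounds the area that `S` must have near the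
curve.

Let `s = p / (n - 1)` and let `q = p / (p - n + 1)` be its conjugate exponent. By Hahn-Banach and
duality of `Lˢ` and `L^q`, a lower bound for the `s`-modulus of the surfaces provides a density in
the unit ball of `L^q` that has large integral against every function admissible for the surfaces.
Averaged over `ε`-balls, it becomes, up to normalisation, admissible for the curves, so that
`M_s(surfaces)^(1/s) * M_q(curves)^(1/q) ≤ 1`. The surface modulus is bounded below by the lower
`Q`-property, Hölder's inequality on each sphere and polar coordinates.

As Mathlib's `H^k` is `c_k` times Lebesgue measure, the constant has to be followed through the
argument; all inequalities go the right way because `1 ≤ c_k`.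
-/

section HausdorffMeasure

/-- The factor `c_k` in `H^k = c_k · volume` on `ℝᵏ`, as Mathlib does not normalise Hausdorff
measure. -/
noncomputable def hausdorffConst (k : ℕ) : ℝ≥0 :=
  Measure.addHaarScalarFactor (μH[(k : ℝ)] : Measure (Eucl k)) volume

lemma hausdorffMeasure_eucl (k : ℕ) (s : Set (Eucl k)) :
    μH[(k : ℝ)] s = hausdorffConst k * volume s := by
  conv_lhs => rw [Measure.isAddLeftInvariant_eq_smul (μH[(k : ℝ)] : Measure (Eucl k)) volume]
  rfl

-- The identity `(ℝᵏ, ‖·‖₂) → (ℝᵏ, ‖·‖_∞)` is 1-Lipschitz, and `H^k` of the sup-norm unit cube is 1.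
lemma one_le_hausdorffConst (k : ℕ) : 1 ≤ hausdorffConst k := by
  have cube_le := (PiLp.lipschitzWith_ofLp 2 fun _ : Fin k => ℝ).hausdorffMeasure_image_le
    (d := (k : ℝ)) (by positivity) (WithLp.ofLp ⁻¹' univ.pi fun _ => Icc 0 1)
  have hausdorff_pi := hausdorffMeasure_pi_real (ι := Fin k)
  rw [Fintype.card_fin] at hausdorff_pi
  rw [hausdorffMeasure_eucl, image_preimage_eq _ (WithLp.ofLp_surjective 2), hausdorff_pi,
    (PiLp.volume_preserving_ofLp (Fin k)).measure_preimage
      (MeasurableSet.univ_pi fun _ => measurableSet_Icc).nullMeasurableSet, volume_pi_pi] at cube_le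
  simpa using cube_le

lemma one_le_coe_hausdorffConst (k : ℕ) : (1 : ℝ≥0∞) ≤ hausdorffConst k :=
  mod_cast one_le_hausdorffConst k

lemma coe_hausdorffConst_ne_zero (k : ℕ) : (hausdorffConst k : ℝ≥0∞) ≠ 0 :=
  (one_pos.trans_le (one_le_coe_hausdorffConst k)).ne'

end HausdorffMeasure

section HeadTail

/-- The splitting `ℝ^{k+1} = ℝ × ℝᵏ` into the first coordinate and the others. -/
noncomputable def headTail (k : ℕ) : Eucl (k + 1) ≃ᵐ ℝ × Eucl k :=
  ((MeasurableEquiv.toLp 2 (Fin (k + 1) → ℝ)).symm.trans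
    (MeasurableEquiv.piFinSuccAbove (fun _ => ℝ) 0)).trans
    (MeasurableEquiv.prodCongr (MeasurableEquiv.refl ℝ) (MeasurableEquiv.toLp 2 (Fin k → ℝ)))

/-- The first vector of the standard basis of `ℝ^{k+1}`. -/
noncomputable def headVec (k : ℕ) : Eucl (k + 1) := EuclideanSpace.single 0 1

variable {k : ℕ}

lemma headTail_fst (x : Eucl (k + 1)) : (headTail k x).1 = x 0 := rfl

lemma headTail_snd_apply (x : Eucl (k + 1)) (j : Fin k) : (headTail k x).2 j = x j.succ := rfl

lemma headTail_add (x y : Eucl (k + 1)) : headTail k (x + y) = headTail k x + headTail k y := rfl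

lemma headTail_sub (x y : Eucl (k + 1)) : headTail k (x - y) = headTail k x - headTail k y := rfl

lemma headTail_smul (t : ℝ) (x : Eucl (k + 1)) : headTail k (t • x) = t • headTail k x := rfl

lemma headTail_headVec : headTail k (headVec k) = (1, 0) := by
  ext j
  · simp [headTail_fst, headVec]
  · simp [headTail_snd_apply, headVec]

lemma norm_headVec : ‖headVec k‖ = 1 := by simp [headVec]

lemma norm_sq_eq_headTail (x : Eucl (k + 1)) :
    ‖x‖ ^ 2 = (headTail k x).1 ^ 2 + ‖(headTail k x).2‖ ^ 2 := by
  simp only [EuclideanSpace.norm_sq_eq, Fin.sum_univ_succ, headTail_fst, headTail_snd_apply,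
    Real.norm_eq_abs, sq_abs]

lemma measurePreserving_headTail (k : ℕ) : MeasurePreserving (headTail k) volume volume := by
  have toLp_tail : MeasurePreserving (Prod.map id (WithLp.toLp 2))
      (volume : Measure (ℝ × (Fin k → ℝ))) (volume : Measure (ℝ × Eucl k)) :=
    (MeasurePreserving.id _).prod (PiLp.volume_preserving_toLp (Fin k))
  exact toLp_tail.comp ((volume_preserving_piFinSuccAbove (fun _ : Fin (k + 1) => ℝ) 0).comp
    (EuclideanSpace.volume_preserving_symm_measurableEquiv_toLp (Fin (k + 1))))

lemma volume_headTail_preimage_prod (s : Set ℝ) (t : Set (Eucl k)) :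
    volume (headTail k ⁻¹' s ×ˢ t) = volume s * volume t := by
  rw [(measurePreserving_headTail k).measure_preimage_equiv, Measure.volume_eq_prod,
    Measure.prod_prod]

lemma measurable_head : Measurable fun x : Eucl (k + 1) => x 0 :=
  measurable_fst.comp (headTail k).measurable

lemma lipschitzWith_headTail_snd : LipschitzWith 1 fun x : Eucl (k + 1) => (headTail k x).2 := by
  refine LipschitzWith.of_dist_le_mul fun x y => ?_
  rw [dist_eq_norm, dist_eq_norm, NNReal.coe_one, one_mul]
  refine le_of_sq_le_sq ?_ (norm_nonneg _)
  rw [norm_sq_eq_headTail (x - y), headTail_sub, Prod.snd_sub]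
  exact le_add_of_nonneg_left (sq_nonneg _)

lemma hausdorffMeasure_image_headTail_snd_le (s : Set (Eucl (k + 1))) :
    μH[(k : ℝ)] ((fun x => (headTail k x).2) '' s) ≤ μH[(k : ℝ)] s := by
  simpa using lipschitzWith_headTail_snd.hausdorffMeasure_image_le (d := k) (by positivity) s

lemma exists_linearIsometryEquiv_headVec (v : Eucl (k + 1)) :
    ∃ g : Eucl (k + 1) ≃ₗᵢ[ℝ] Eucl (k + 1), g v = ‖v‖ • headVec k := by
  refine ⟨(ℝ ∙ (v - ‖v‖ • headVec k))ᗮ.reflection, Submodule.reflection_sub ?_⟩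
  rw [norm_smul, norm_headVec, norm_norm, mul_one]

end HeadTail

section Crofton

variable {k : ℕ}

/-- The set of all `z` such that the translate of the segment `[a, b]` by `z` meets `S`. -/
def segmentHits (a b : Eucl k) (S : Set (Eucl k)) : Set (Eucl k) :=
  {z | ∃ x ∈ segment ℝ a b, z + x ∈ S}

lemma tsum_hausdorffMeasure_inter_slab {d h : ℝ} (hh : 0 < h) {S : Set (Eucl (k + 1))}
    (hS : MeasurableSet S) :
    ∑' j : ℤ, μH[d] (S ∩ (fun x => x 0) ⁻¹' Ico (j • h) ((j + 1) • h)) = μH[d] S := by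
  rw [← measure_iUnion, ← inter_iUnion, ← preimage_iUnion, iUnion_Ico_zsmul hh, preimage_univ,
    inter_univ]
  · exact fun i j hij => ((pairwise_disjoint_Ico_zsmul h hij).preimage _).mono
      inter_subset_right inter_subset_right
  · exact fun j => hS.inter (measurable_head measurableSet_Ico)

lemma segmentHits_headVec_subset {l h : ℝ} (hl : 0 ≤ l) (hh : 0 < h) (S : Set (Eucl (k + 1))) :
    segmentHits 0 (l • headVec k) S ⊆ ⋃ j : ℤ, headTail k ⁻¹' Icc (j • h - l) ((j + 1) • h) ×ˢ
      ((fun x => (headTail k x).2) '' (S ∩ (fun x => x 0) ⁻¹' Ico (j • h) ((j + 1) • h))) := by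
  rintro z ⟨_, hx, hz⟩
  obtain ⟨t, ht, rfl⟩ := (segment_eq_image' ℝ 0 (l • headVec k)).subset hx
  simp only [sub_zero, zero_add, smul_smul] at hz
  have head_eq : (z + (t * l) • headVec k) 0 = z 0 + t * l := by simp [headVec]
  obtain ⟨j, hj⟩ := mem_iUnion.1 ((iUnion_Ico_zsmul hh).ge (mem_univ (z 0 + t * l)))
  have tl_nonneg : 0 ≤ t * l := mul_nonneg ht.1 hl
  have tl_le : t * l ≤ l := mul_le_of_le_one_left hl ht.2
  refine mem_iUnion.2 ⟨j, ⟨?_, ?_⟩, _, ⟨hz, by rwa [mem_preimage, head_eq]⟩, ?_⟩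
  · rw [headTail_fst]; linarith [hj.1]
  · rw [headTail_fst]; linarith [hj.2]
  · simp [headTail_add, headTail_smul, headTail_headVec]

lemma volume_segmentHits_headVec_le_add {l h : ℝ} (hl : 0 ≤ l) (hh : 0 < h)
    {S : Set (Eucl (k + 1))} (hS : MeasurableSet S) :
    hausdorffConst k * volume (segmentHits 0 (l • headVec k) S) ≤
      ENNReal.ofReal (l + h) * μH[(k : ℝ)] S := by
  set slab : ℤ → Set (Eucl (k + 1)) := fun j =>
    S ∩ (fun x => x 0) ⁻¹' Ico (j • h) ((j + 1) • h)
  set proj : Set (Eucl (k + 1)) → Set (Eucl k) := image fun x => (headTail k x).2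
  calc hausdorffConst k * volume (segmentHits 0 (l • headVec k) S)
      ≤ hausdorffConst k * ∑' j : ℤ, volume
          (headTail k ⁻¹' Icc (j • h - l) ((j + 1) • h) ×ˢ proj (slab j)) := by
        gcongr
        exact (measure_mono (segmentHits_headVec_subset hl hh S)).trans (measure_iUnion_le _)
    _ = ENNReal.ofReal (l + h) * ∑' j : ℤ, μH[(k : ℝ)] (proj (slab j)) := by
        have length_eq (j : ℤ) : (j + 1) • h - (j • h - l) = l + h := by
          rw [add_smul, one_smul]; ring
        simp_rw [volume_headTail_preimage_prod, Real.volume_Icc, length_eq, hausdorffMeasure_eucl,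
          ENNReal.tsum_mul_left]
        ring
    _ ≤ ENNReal.ofReal (l + h) * ∑' j : ℤ, μH[(k : ℝ)] (slab j) := by
        gcongr with j
        exact hausdorffMeasure_image_headTail_snd_le _
    _ = ENNReal.ofReal (l + h) * μH[(k : ℝ)] S := by
        rw [tsum_hausdorffMeasure_inter_slab hh hS]

lemma volume_segmentHits_headVec_le {l : ℝ} (hl : 0 < l) {S : Set (Eucl (k + 1))}
    (hS : MeasurableSet S) :
    hausdorffConst k * volume (segmentHits 0 (l • headVec k) S) ≤
      ENNReal.ofReal l * μH[(k : ℝ)] S := by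
  rcases eq_or_ne (μH[(k : ℝ)] S) ⊤ with infinite | finite
  · rw [infinite, ENNReal.mul_top (by simpa using hl)]
    exact le_top
  have thin_slabs : Tendsto (fun h => ENNReal.ofReal (l + h) * μH[(k : ℝ)] S) (𝓝[>] 0)
      (𝓝 (ENNReal.ofReal l * μH[(k : ℝ)] S)) := by
    refine ENNReal.Tendsto.mul_const (ENNReal.tendsto_ofReal ?_) (Or.inr finite)
    exact (Continuous.tendsto' (by fun_prop) 0 l (add_zero l)).mono_left nhdsWithin_le_nhds
  refine ge_of_tendsto thin_slabs ?_
  filter_upwards [self_mem_nhdsWithin] with h hh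
    using volume_segmentHits_headVec_le_add hl.le hh hS

theorem volume_segmentHits_le {a b : Eucl (k + 1)} (hab : a ≠ b) {S : Set (Eucl (k + 1))}
    (hS : MeasurableSet S) :
    hausdorffConst k * volume (segmentHits a b S) ≤ edist a b * μH[(k : ℝ)] S := by
  obtain ⟨g, hg⟩ := exists_linearIsometryEquiv_headVec (b - a)
  have norm_eq : ‖b - a‖ = dist a b := by rw [dist_comm, dist_eq_norm]
  have hits_eq : segmentHits a b S =
      (· + a) ⁻¹' (g ⁻¹' segmentHits 0 (dist a b • headVec k) (g.symm ⁻¹' S)) := by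
    ext z
    simp only [segmentHits, segment_eq_image', ← norm_eq, ← hg, mem_preimage, mem_ofPred_eq,
      exists_mem_image, sub_zero, zero_add, map_add, map_smul, g.symm_apply_apply, add_assoc]
  calc hausdorffConst k * volume (segmentHits a b S)
      = hausdorffConst k *
          volume (segmentHits 0 (dist a b • headVec k) (g.symm ⁻¹' S)) := by
        rw [hits_eq, measure_preimage_add_right]
        exact congrArg _ (g.measurePreserving.measure_preimage_equiv (f := g.toMeasurableEquiv) _)
    _ ≤ ENNReal.ofReal (dist a b) * μH[(k : ℝ)] (g.symm ⁻¹' S) :=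
        volume_segmentHits_headVec_le (dist_pos.2 hab) (g.symm.continuous.measurable hS)
    _ = edist a b * μH[(k : ℝ)] S := by
        rw [edist_dist, show μH[(k : ℝ)] (g.symm ⁻¹' S) = μH[(k : ℝ)] S from
          g.symm.toIsometryEquiv.hausdorffMeasure_preimage k S]

end Crofton

section Sphere

open scoped Pointwise
open NormedSpace (normalize)

lemma lipschitzOnWith_normalize {E : Type*} [NormedAddCommGroup E] [InnerProductSpace ℝ E] :
    LipschitzOnWith 1 (normalize : E → E) {x | 1 ≤ ‖x‖} := by
  refine LipschitzOnWith.of_dist_le_mul fun x hx y hy => ?_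
  have norm_pos {z : E} (hz : 1 ≤ ‖z‖) : 0 < ‖z‖ := one_pos.trans_le hz
  have norm_normalize {z : E} (hz : 1 ≤ ‖z‖) : ‖normalize z‖ = 1 :=
    NormedSpace.norm_normalize (norm_pos_iff.1 (norm_pos hz))
  have inner_le : ⟪normalize x, normalize y⟫ ≤ 1 := by
    simpa [norm_normalize hx, norm_normalize hy] using
      real_inner_le_norm (normalize x) (normalize y)
  have inner_eq : ⟪x, y⟫ = ‖x‖ * (‖y‖ * ⟪normalize x, normalize y⟫) := by
    rw [← real_inner_smul_right, ← real_inner_smul_left, NormedSpace.norm_smul_normalize,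
      NormedSpace.norm_smul_normalize]
  rw [dist_eq_norm, dist_eq_norm, NNReal.coe_one, one_mul]
  refine le_of_sq_le_sq ?_ (norm_nonneg _)
  rw [norm_sub_sq_real, norm_sub_sq_real, inner_eq, norm_normalize hx, norm_normalize hy]
  nlinarith [sq_nonneg (‖x‖ - ‖y‖),
    mul_nonneg (sub_nonneg.2 (one_le_mul_of_one_le_of_one_le hx hy)) (sub_nonneg.2 inner_le)]

variable {k : ℕ}

/-- The inverse of the gnomonic chart of the half sphere `{x | 0 < x 0}` of `ℝ^{k+1}`: the point of
the sphere on the ray through `(1, y)`. -/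
noncomputable def gnomonic (y : Eucl k) : Eucl (k + 1) := normalize ((headTail k).symm (1, y))

lemma one_le_norm_headTail_symm (y : Eucl k) : 1 ≤ ‖(headTail k).symm (1, y)‖ := by
  have norm_sq := norm_sq_eq_headTail ((headTail k).symm (1, y))
  rw [MeasurableEquiv.apply_symm_apply] at norm_sq
  nlinarith [norm_nonneg ((headTail k).symm (1, y)), sq_nonneg ‖y‖]

lemma dist_headTail_symm (x y : Eucl k) :
    dist ((headTail k).symm (1, x)) ((headTail k).symm (1, y)) = dist x y := by
  have norm_sq := norm_sq_eq_headTail ((headTail k).symm (1, x) - (headTail k).symm (1, y))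
  simp only [headTail_sub, MeasurableEquiv.apply_symm_apply, Prod.fst_sub, Prod.snd_sub, sub_self,
    ne_eq, OfNat.ofNat_ne_zero, not_false_eq_true, zero_pow, zero_add] at norm_sq
  rw [dist_eq_norm, dist_eq_norm]
  exact (sq_eq_sq₀ (norm_nonneg _) (norm_nonneg _)).1 norm_sq

lemma lipschitzWith_gnomonic : LipschitzWith 1 (gnomonic (k := k)) :=
  LipschitzWith.of_dist_le_mul fun x y =>
    (lipschitzOnWith_normalize.dist_le_mul _ (one_le_norm_headTail_symm x) _
      (one_le_norm_headTail_symm y)).trans_eq (by rw [dist_headTail_symm])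

lemma headTail_symm_div_head {x : Eucl (k + 1)} (hx : x 0 ≠ 0) :
    (headTail k).symm (1, (x 0)⁻¹ • (headTail k x).2) = (x 0)⁻¹ • x := by
  rw [MeasurableEquiv.symm_apply_eq, headTail_smul]
  exact Prod.ext (by simp [headTail_fst, hx]) rfl

lemma gnomonic_div_head {x : Eucl (k + 1)} (hx : 0 < x 0) :
    gnomonic ((x 0)⁻¹ • (headTail k x).2) = normalize x := by
  rw [gnomonic, headTail_symm_div_head hx.ne', NormedSpace.normalize_smul_of_pos (inv_pos.2 hx)]

lemma hausdorffMeasure_le_volume_gnomonic_preimage {A : Set (Eucl (k + 1))}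
    (norm_eq : ∀ x ∈ A, ‖x‖ = 1) (head_pos : ∀ x ∈ A, 0 < x 0) :
    μH[(k : ℝ)] A ≤ hausdorffConst k * volume (gnomonic ⁻¹' A) := by
  have covered : A ⊆ gnomonic '' (gnomonic ⁻¹' A) := fun x hx => by
    have eq_self := (gnomonic_div_head (head_pos x hx)).trans
      (NormedSpace.normalize_eq_self_of_norm_eq_one (norm_eq x hx))
    exact ⟨_, by rwa [mem_preimage, eq_self], eq_self⟩
  rw [← hausdorffMeasure_eucl]
  simpa using (measure_mono covered).trans
    (lipschitzWith_gnomonic.hausdorffMeasure_image_le (d := k) (by positivity) _)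

/-- The cone with apex `0`, height `τ` and slices `s • G` in `ℝ × E`. -/
def coneOver {E : Type*} [AddCommGroup E] [Module ℝ E] (τ : ℝ) (G : Set E) : Set (ℝ × E) :=
  {q | q.1 ∈ Ioo 0 τ ∧ q.1⁻¹ • q.2 ∈ G}

lemma lintegral_Ioo_zero_pow {τ : ℝ} (hτ : 0 ≤ τ) (m : ℕ) :
    ∫⁻ s in Ioo 0 τ, ENNReal.ofReal (s ^ m) = ENNReal.ofReal (τ ^ (m + 1) / (m + 1)) := by
  rw [restrict_Ioo_eq_restrict_Ioc, ← ofReal_integral_eq_lintegral_ofReal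
    (intervalIntegral.intervalIntegrable_pow _).1, ← intervalIntegral.integral_of_le hτ]
  · simp
  · filter_upwards [ae_restrict_mem measurableSet_Ioc] with s hs using pow_nonneg hs.1.le _

lemma measure_coneOver {E : Type*} [NormedAddCommGroup E] [NormedSpace ℝ E] [MeasurableSpace E]
    [BorelSpace E] [FiniteDimensional ℝ E] (μ : Measure E) [μ.IsAddHaarMeasure] {τ : ℝ}
    (hτ : 0 ≤ τ) {G : Set E} (hG : MeasurableSet G) :
    (volume.prod μ) (coneOver τ G) =
      ENNReal.ofReal (τ ^ (Module.finrank ℝ E + 1) / (Module.finrank ℝ E + 1)) * μ G := by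
  have measurable_cone : MeasurableSet (coneOver τ G) :=
    (measurable_fst measurableSet_Ioo).inter ((measurable_fst.inv.smul measurable_snd) hG)
  have slice (s : ℝ) : μ (Prod.mk s ⁻¹' coneOver τ G) =
      (Ioo 0 τ).indicator (fun s => ENNReal.ofReal (s ^ Module.finrank ℝ E) * μ G) s := by
    by_cases hs : s ∈ Ioo 0 τ
    · have slice_eq : Prod.mk s ⁻¹' coneOver τ G = (s⁻¹ • ·) ⁻¹' G := by
        ext v; simp only [coneOver, mem_preimage, mem_ofPred_eq, hs, true_and]
      rw [indicator_of_mem hs, slice_eq, Measure.addHaar_preimage_smul _ (inv_ne_zero hs.1.ne'),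
        inv_pow, inv_inv, abs_of_pos (pow_pos hs.1 _)]
    · have slice_eq : Prod.mk s ⁻¹' coneOver τ G = ∅ := by
        ext v; simp only [coneOver, mem_preimage, mem_ofPred_eq, hs, false_and, mem_empty_iff_false]
      rw [indicator_of_notMem hs, slice_eq, measure_empty]
  simp_rw [Measure.prod_apply measurable_cone, slice]
  rw [lintegral_indicator measurableSet_Ioo, lintegral_mul_const _ (by fun_prop),
    lintegral_Ioo_zero_pow hτ]

lemma headTail_preimage_coneOver_subset {τ : ℝ} {A : Set (Eucl (k + 1))}
    (le_head : ∀ x ∈ A, τ ≤ x 0) :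
    headTail k ⁻¹' coneOver τ (gnomonic ⁻¹' A) ⊆ Ioo (0 : ℝ) 1 • A := by
  rintro z ⟨⟨head_pos, head_lt⟩, hz⟩
  rw [headTail_fst] at head_pos head_lt hz
  have normalize_mem : normalize z ∈ A := by rwa [mem_preimage, gnomonic_div_head head_pos] at hz
  have norm_pos : 0 < ‖z‖ := norm_pos_iff.2 fun hz0 => by simp [hz0] at head_pos
  refine ⟨‖z‖, ⟨norm_pos, ?_⟩, _, normalize_mem, NormedSpace.norm_smul_normalize z⟩
  have le_div : τ ≤ ‖z‖⁻¹ * z 0 := le_head _ normalize_mem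
  exact lt_of_not_ge fun one_le => (head_lt.trans_le le_div).not_ge
    (mul_le_of_le_one_left head_pos.le (inv_le_one_of_one_le₀ one_le))

lemma hausdorffMeasure_le_volume_cone_of_le_head {τ : ℝ} (hτ : 0 < τ) {A : Set (Eucl (k + 1))}
    (hA : MeasurableSet A) (norm_eq : ∀ x ∈ A, ‖x‖ = 1) (le_head : ∀ x ∈ A, τ ≤ x 0) :
    ENNReal.ofReal (τ ^ (k + 1)) * μH[(k : ℝ)] A ≤
      hausdorffConst k * ((k + 1 : ℕ) * volume (Ioo (0 : ℝ) 1 • A)) := by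
  have volume_cone : volume (headTail k ⁻¹' coneOver τ (gnomonic ⁻¹' A)) =
      ENNReal.ofReal (τ ^ (k + 1) / (k + 1)) * volume (gnomonic ⁻¹' A) := by
    rw [(measurePreserving_headTail k).measure_preimage_equiv, Measure.volume_eq_prod,
      measure_coneOver volume hτ.le (lipschitzWith_gnomonic.continuous.measurable hA),
      finrank_euclideanSpace_fin]
  have pow_eq : ENNReal.ofReal (τ ^ (k + 1)) =
      (k + 1 : ℕ) * ENNReal.ofReal (τ ^ (k + 1) / (k + 1)) := by
    rw [← ENNReal.ofReal_natCast, ← ENNReal.ofReal_mul (by positivity), Nat.cast_succ,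
      mul_div_cancel₀ _ (by positivity)]
  calc ENNReal.ofReal (τ ^ (k + 1)) * μH[(k : ℝ)] A
      ≤ ENNReal.ofReal (τ ^ (k + 1)) * (hausdorffConst k * volume (gnomonic ⁻¹' A)) := by
        gcongr
        exact hausdorffMeasure_le_volume_gnomonic_preimage norm_eq
          fun x hx => hτ.trans_le (le_head x hx)
    _ = hausdorffConst k *
          ((k + 1 : ℕ) * volume (headTail k ⁻¹' coneOver τ (gnomonic ⁻¹' A))) := by
        rw [volume_cone, pow_eq]; ring
    _ ≤ hausdorffConst k * ((k + 1 : ℕ) * volume (Ioo (0 : ℝ) 1 • A)) := by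
        gcongr
        exact headTail_preimage_coneOver_subset le_head

lemma hausdorffMeasure_le_volume_cone {τ : ℝ} (hτ : 0 < τ) {e : Eucl (k + 1)} (he : ‖e‖ = 1)
    {A : Set (Eucl (k + 1))} (hA : MeasurableSet A) (norm_eq : ∀ x ∈ A, ‖x‖ = 1)
    (le_inner : ∀ x ∈ A, τ ≤ ⟪e, x⟫) :
    ENNReal.ofReal (τ ^ (k + 1)) * μH[(k : ℝ)] A ≤
      hausdorffConst k * ((k + 1 : ℕ) * volume (Ioo (0 : ℝ) 1 • A)) := by
  obtain ⟨g, hg⟩ := exists_linearIsometryEquiv_headVec e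
  rw [he, one_smul] at hg
  have inner_eq (x : Eucl (k + 1)) : ⟪e, g.symm x⟫ = x 0 := by
    rw [← g.inner_map_map, hg, g.apply_symm_apply, headVec, EuclideanSpace.inner_single_left,
      map_one, one_mul]
  have cone_eq : Ioo (0 : ℝ) 1 • (g.symm ⁻¹' A) = g.symm ⁻¹' (Ioo (0 : ℝ) 1 • A) := by
    rw [← g.image_eq_preimage_symm, ← g.image_eq_preimage_symm, ← image2_smul, ← image2_smul,
      image_image2, image2_image_right]
    simp only [map_smul]
  have rotated := hausdorffMeasure_le_volume_cone_of_le_head hτ (A := g.symm ⁻¹' A)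
    (g.symm.continuous.measurable hA)
    (fun x hx => by rw [← norm_eq _ hx, LinearIsometryEquiv.norm_map])
    (fun x hx => (le_inner _ hx).trans_eq (inner_eq x))
  rwa [cone_eq, show μH[(k : ℝ)] (g.symm ⁻¹' A) = μH[(k : ℝ)] A from
      g.symm.toIsometryEquiv.hausdorffMeasure_preimage k A,
    show volume (g.symm ⁻¹' (Ioo (0 : ℝ) 1 • A)) = volume (Ioo (0 : ℝ) 1 • A) from
      g.symm.measurePreserving.measure_preimage_equiv (f := g.symm.toMeasurableEquiv) _] at rotated

lemma measure_le_of_iUnion_eq_univ {X : Type*} [MeasurableSpace X] {μ ν : Measure X}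
    {B : ℕ → Set X} (hB : ∀ i, MeasurableSet (B i)) (cover : ⋃ i, B i = univ)
    (le_on : ∀ i, ∀ A ⊆ B i, MeasurableSet A → μ A ≤ ν A) : μ ≤ ν := by
  refine Measure.le_iff.2 fun A hA => ?_
  have measurable_piece (i : ℕ) : MeasurableSet (A ∩ disjointed B i) :=
    hA.inter (MeasurableSet.disjointed hB i)
  have disjoint_pieces : Pairwise (Function.onFun Disjoint fun i => A ∩ disjointed B i) :=
    fun i j hij => (disjoint_disjointed B hij).mono inter_subset_right inter_subset_right
  rw [← inter_univ A, ← cover, ← iUnion_disjointed, inter_iUnion,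
    measure_iUnion disjoint_pieces measurable_piece,
    measure_iUnion disjoint_pieces measurable_piece]
  exact ENNReal.tsum_le_tsum fun i => le_on i _
    (inter_subset_right.trans (disjointed_subset B i)) (measurable_piece i)

lemma one_sub_sq_half_le_inner {E : Type*} [NormedAddCommGroup E] [InnerProductSpace ℝ E]
    {x y : E} (hx : ‖x‖ = 1) (hy : ‖y‖ = 1) {h : ℝ} (hxy : ‖x - y‖ ≤ h) :
    1 - h ^ 2 / 2 ≤ ⟪x, y⟫ := by
  have polarization := norm_sub_sq_real x y
  rw [hx, hy] at polarization
  nlinarith [pow_le_pow_left₀ (norm_nonneg (x - y)) hxy 2]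

lemma measurableEmbedding_coe_sphere {E : Type*} [NormedAddCommGroup E] [MeasurableSpace E]
    [BorelSpace E] (x : E) (r : ℝ) : MeasurableEmbedding ((↑) : sphere x r → E) :=
  MeasurableEmbedding.subtype_coe isClosed_sphere.measurableSet

-- On a cap of radius `h`, the cone of height `1 - h² / 2` over the gnomonic chart stays in the
-- unit ball.
lemma smul_hausdorffMeasure_sphere_le {h : ℝ} (hh : 0 < h) (h_lt : h < 1) :
    ENNReal.ofReal ((1 - h ^ 2 / 2) ^ (k + 1)) •
        (μH[(k : ℝ)] : Measure (Eucl (k + 1))).comap ((↑) : sphere (0 : Eucl (k + 1)) 1 → _) ≤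
      hausdorffConst k • (volume : Measure (Eucl (k + 1))).toSphere := by
  have : Nonempty (sphere (0 : Eucl (k + 1)) 1) := ⟨⟨headVec k, by simp [norm_headVec]⟩⟩
  set u := TopologicalSpace.denseSeq (sphere (0 : Eucl (k + 1)) 1)
  have norm_coe (x : sphere (0 : Eucl (k + 1)) 1) : ‖(x : Eucl (k + 1))‖ = 1 :=
    norm_eq_of_mem_sphere x
  refine measure_le_of_iUnion_eq_univ (B := fun i => ball (u i) h) (fun i => measurableSet_ball)
    (iUnion_eq_univ_iff.2 fun x =>
      (TopologicalSpace.denseRange_denseSeq _).exists_dist_lt x hh) fun i A hAi hA => ?_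
  have cap_le := hausdorffMeasure_le_volume_cone (τ := 1 - h ^ 2 / 2) (by nlinarith)
    (norm_coe (u i)) ((measurableEmbedding_coe_sphere _ _).measurableSet_image.2 hA)
    (forall_mem_image.2 fun x _ => norm_coe x)
    (forall_mem_image.2 fun x hx => one_sub_sq_half_le_inner (norm_coe _) (norm_coe _)
      (mem_ball'.1 (hAi hx)).le)
  rw [Measure.smul_apply, Measure.smul_apply, (measurableEmbedding_coe_sphere _ _).comap_apply,
    Measure.toSphere_apply' _ hA, finrank_euclideanSpace_fin]
  exact cap_le

theorem hausdorffMeasure_comap_sphere_le :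
    (μH[(k : ℝ)] : Measure (Eucl (k + 1))).comap ((↑) : sphere (0 : Eucl (k + 1)) 1 → _) ≤
      hausdorffConst k • (volume : Measure (Eucl (k + 1))).toSphere := by
  refine Measure.le_iff.2 fun A _ => ?_
  have small_caps : Tendsto (fun h : ℝ => ENNReal.ofReal ((1 - h ^ 2 / 2) ^ (k + 1)) *
      (μH[(k : ℝ)] : Measure (Eucl (k + 1))).comap ((↑) : sphere (0 : Eucl (k + 1)) 1 → _) A)
      (𝓝[>] 0) (𝓝 (1 * (μH[(k : ℝ)] : Measure (Eucl (k + 1))).comap (↑) A)) := by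
    refine ENNReal.Tendsto.mul_const (Tendsto.mono_left ?_ nhdsWithin_le_nhds) (Or.inl one_ne_zero)
    exact (ENNReal.continuous_ofReal.comp (by fun_prop)).tendsto' 0 1 (by simp)
  rw [one_mul] at small_caps
  refine le_of_tendsto small_caps ?_
  filter_upwards [Ioo_mem_nhdsGT zero_lt_one] with h hh
    using smul_hausdorffMeasure_sphere_le hh.1 hh.2 A

end Sphere

section Polar

open scoped Pointwise

lemma lintegral_eq_lintegral_toSphere {E : Type*} [NormedAddCommGroup E] [NormedSpace ℝ E]
    [Nontrivial E] [MeasurableSpace E] [BorelSpace E] [FiniteDimensional ℝ E] (μ : Measure E)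
    [μ.IsAddHaarMeasure] {F : E → ℝ≥0∞} (hF : Measurable F) :
    ∫⁻ x, F x ∂μ = ∫⁻ r in Ioi (0 : ℝ), ENNReal.ofReal (r ^ (Module.finrank ℝ E - 1)) *
      ∫⁻ ω : sphere (0 : E) 1, F (r • (ω : E)) ∂μ.toSphere := by
  have measurable_polar : Measurable fun z : sphere (0 : E) 1 × Ioi (0 : ℝ) =>
      F ((z.2 : ℝ) • (z.1 : E)) := hF.comp (by fun_prop)
  have polar_eq (x : ({0}ᶜ : Set E)) : F (((homeomorphUnitSphereProd E x).2 : ℝ) •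
      ((homeomorphUnitSphereProd E x).1 : E)) = F x := by
    rw [← homeomorphUnitSphereProd_symm_apply_coe, Homeomorph.symm_apply_apply]
  calc ∫⁻ x, F x ∂μ
      = ∫⁻ x : ({0}ᶜ : Set E), F x ∂μ.comap (↑) := by
        rw [lintegral_subtype_comap (measurableSet_singleton _).compl, restrict_compl_singleton]
    _ = ∫⁻ z, F ((z.2 : ℝ) • (z.1 : E))
          ∂μ.toSphere.prod (Measure.volumeIoiPow (Module.finrank ℝ E - 1)) := by
        rw [← μ.measurePreserving_homeomorphUnitSphereProd.lintegral_comp measurable_polar]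
        simp_rw [polar_eq]
    _ = _ := by
        rw [lintegral_prod_symm' _ measurable_polar, Measure.volumeIoiPow,
          lintegral_withDensity_eq_lintegral_mul _ (by fun_prop)
            measurable_polar.lintegral_prod_left', ← lintegral_subtype_comap measurableSet_Ioi]
        rfl

variable {k : ℕ}

lemma hausdorffMeasure_image_affinity (x₀ : Eucl (k + 1)) {r : ℝ} (hr : 0 < r)
    (s : Set (Eucl (k + 1))) :
    μH[(k : ℝ)] ((fun ω => x₀ + r • ω) '' s) = ENNReal.ofReal (r ^ k) * μH[(k : ℝ)] s := by
  rw [← image_image (x₀ + ·) (r • ·) s, image_smul]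
  refine ((IsometryEquiv.addLeft x₀).hausdorffMeasure_image _ _).trans ?_
  rw [Measure.hausdorffMeasure_smul₀ (by positivity) hr.ne', NNReal.rpow_natCast,
    ENNReal.smul_def, smul_eq_mul, ENNReal.coe_pow, ENNReal.ofReal_pow hr.le,
    ← Real.enorm_of_nonneg hr.le]
  rfl

lemma image_affinity_sphere (x₀ : Eucl (k + 1)) {r : ℝ} (hr : 0 < r) :
    (fun ω => x₀ + r • ω) '' sphere 0 1 = sphere x₀ r := by
  rw [← image_image (x₀ + ·) (r • ·), image_smul, smul_sphere' hr.ne', smul_zero, mul_one,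
    Real.norm_of_nonneg hr.le]
  simp

lemma hausdorffMeasure_restrict_sphere (x₀ : Eucl (k + 1)) {r : ℝ} (hr : 0 < r) :
    (μH[(k : ℝ)] : Measure (Eucl (k + 1))).restrict (sphere x₀ r) = ENNReal.ofReal (r ^ k) •
      ((μH[(k : ℝ)] : Measure (Eucl (k + 1))).restrict (sphere 0 1)).map fun ω => x₀ + r • ω := by
  have measurable_affinity : Measurable fun ω : Eucl (k + 1) => x₀ + r • ω := by fun_prop
  ext A hA
  rw [Measure.restrict_apply hA, Measure.smul_apply, Measure.map_apply measurable_affinity hA,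
    Measure.restrict_apply (measurable_affinity hA), smul_eq_mul,
    ← hausdorffMeasure_image_affinity x₀ hr, image_preimage_inter, image_affinity_sphere x₀ hr]

lemma lintegral_sphere (x₀ : Eucl (k + 1)) {r : ℝ} (hr : 0 < r) {F : Eucl (k + 1) → ℝ≥0∞}
    (hF : Measurable F) :
    ∫⁻ x in sphere x₀ r, F x ∂μH[(k : ℝ)] =
      ENNReal.ofReal (r ^ k) * ∫⁻ ω in sphere 0 1, F (x₀ + r • ω) ∂μH[(k : ℝ)] := by
  rw [hausdorffMeasure_restrict_sphere x₀ hr, lintegral_smul_measure,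
    lintegral_map hF (by fun_prop), smul_eq_mul]

lemma lintegral_unitSphere_le (F : Eucl (k + 1) → ℝ≥0∞) :
    ∫⁻ ω in sphere 0 1, F ω ∂μH[(k : ℝ)] ≤ hausdorffConst k *
      ∫⁻ ω : sphere (0 : Eucl (k + 1)) 1, F ω ∂(volume : Measure (Eucl (k + 1))).toSphere := by
  rw [← lintegral_subtype_comap isClosed_sphere.measurableSet]
  exact (lintegral_mono' hausdorffMeasure_comap_sphere_le le_rfl).trans_eq
    (lintegral_smul_measure _ _)

lemma hausdorffMeasure_sphere_lt_top (x₀ : Eucl (k + 1)) {r : ℝ} (hr : 0 < r) :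
    μH[(k : ℝ)] (sphere x₀ r) < ⊤ := by
  have unit_lt_top : ∫⁻ _ in sphere (0 : Eucl (k + 1)) 1, 1 ∂μH[(k : ℝ)] < ⊤ := by
    refine (lintegral_unitSphere_le _).trans_lt ?_
    rw [lintegral_one]
    exact ENNReal.mul_lt_top ENNReal.coe_lt_top (measure_lt_top _ _)
  rw [← setLIntegral_one, lintegral_sphere x₀ hr measurable_const]
  exact ENNReal.mul_lt_top ENNReal.ofReal_lt_top unit_lt_top

lemma measurableSet_ringA {n : ℕ} (x₀ : Eucl n) (a b : ℝ) : MeasurableSet (ringA x₀ a b) := by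
  have measurable_dist : Measurable fun x : Eucl n => dist x x₀ := by fun_prop
  exact (measurableSet_lt measurable_const measurable_dist).inter
    (measurableSet_lt measurable_dist measurable_const)

theorem lintegral_lintegral_sphere_le (x₀ : Eucl (k + 1)) {a : ℝ} (ha : 0 ≤ a) (b : ℝ)
    {F : Eucl (k + 1) → ℝ≥0∞} (hF : Measurable F) :
    ∫⁻ r in Ioo a b, ∫⁻ x in sphere x₀ r, F x ∂μH[(k : ℝ)] ≤
      hausdorffConst k * ∫⁻ x in ringA x₀ a b, F x := by
  set G : Eucl (k + 1) → ℝ≥0∞ := fun x => (ringA x₀ a b).indicator F (x₀ + x)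
  have measurable_G : Measurable G :=
    (hF.indicator (measurableSet_ringA x₀ a b)).comp (by fun_prop)
  have Ioo_subset : Ioo a b ⊆ Ioi 0 := fun r hr => ha.trans_lt hr.1
  have G_eq {r : ℝ} (hr : r ∈ Ioo a b) (ω : sphere (0 : Eucl (k + 1)) 1) :
      F (x₀ + r • (ω : Eucl (k + 1))) = G (r • (ω : Eucl (k + 1))) := by
    refine (indicator_of_mem (s := ringA x₀ a b) ?_ F).symm
    simpa [ringA, norm_smul, abs_of_pos (mem_Ioi.1 (Ioo_subset hr))] using hr
  have sphere_le {r : ℝ} (hr : r ∈ Ioo a b) : ∫⁻ x in sphere x₀ r, F x ∂μH[(k : ℝ)] ≤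
      hausdorffConst k * (ENNReal.ofReal (r ^ k) * ∫⁻ ω : sphere (0 : Eucl (k + 1)) 1,
        G (r • (ω : Eucl (k + 1))) ∂(volume : Measure (Eucl (k + 1))).toSphere) := by
    rw [lintegral_sphere x₀ (Ioo_subset hr) hF, mul_left_comm]
    gcongr
    refine (lintegral_unitSphere_le fun ω => F (x₀ + r • ω)).trans_eq ?_
    simp_rw [G_eq hr]
  calc ∫⁻ r in Ioo a b, ∫⁻ x in sphere x₀ r, F x ∂μH[(k : ℝ)]
      ≤ ∫⁻ r in Ioi 0, hausdorffConst k * (ENNReal.ofReal (r ^ k) *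
          ∫⁻ ω : sphere (0 : Eucl (k + 1)) 1, G (r • (ω : Eucl (k + 1)))
            ∂(volume : Measure (Eucl (k + 1))).toSphere) :=
        (setLIntegral_mono' measurableSet_Ioo fun r => sphere_le).trans
          (lintegral_mono_set Ioo_subset)
    _ = hausdorffConst k * ∫⁻ x, G x := by
        rw [lintegral_const_mul' _ _ ENNReal.coe_ne_top,
          lintegral_eq_lintegral_toSphere volume measurable_G, finrank_euclideanSpace_fin,
          Nat.add_sub_cancel]
    _ = hausdorffConst k * ∫⁻ x in ringA x₀ a b, F x := by
        rw [lintegral_add_left_eq_self, lintegral_indicator (measurableSet_ringA x₀ a b)]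

end Polar

theorem exists_strongDual_norm_le_one_of_convex {E : Type*} [NormedAddCommGroup E]
    [NormedSpace ℝ E] {K : Set E} (hK : Convex ℝ K) {r : ℝ} (hr : ∀ h ∈ K, r ≤ ‖h‖) :
    ∃ ψ : StrongDual ℝ E, ‖ψ‖ ≤ 1 ∧ ∀ h ∈ K, r ≤ ψ h := by
  rcases le_or_gt r 0 with hr0 | hr0
  · exact ⟨0, by simp, fun _ _ => hr0⟩
  have hdisj : Disjoint (ball (0 : E) r) K :=
    disjoint_left.2 fun h hball hhK => (hr h hhK).not_gt (mem_ball_zero_iff.1 hball)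
  obtain ⟨φ, u, hball, hKu⟩ := geometric_hahn_banach_open (convex_ball 0 r) isOpen_ball hK hdisj
  have hu : 0 < u := by simpa using hball 0 (mem_ball_self hr0)
  have hpolar : u⁻¹ • φ ∈ StrongDual.polar ℝ (ball (0 : E) r) := by
    refine (StrongDual.mem_polar_iff ℝ _).2 fun z hz => ?_
    have hpos := hball z hz
    have hneg := hball (-z) (by simpa using hz)
    rw [map_neg] at hneg
    rw [smul_apply, norm_smul, norm_inv, Real.norm_of_nonneg hu.le,
      inv_mul_le_one₀ hu]
    exact abs_le.2 ⟨by linarith, hpos.le⟩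
  rw [NormedSpace.polar_ball hr0, mem_closedBall_zero_iff] at hpolar
  refine ⟨r • u⁻¹ • φ, ?_, fun h hh => ?_⟩
  · rw [norm_smul, Real.norm_of_nonneg hr0.le]
    exact (mul_le_mul_of_nonneg_left hpolar hr0.le).trans_eq (mul_inv_cancel₀ hr0.ne')
  · have h1 : 1 ≤ u⁻¹ * φ h := by
      rw [inv_mul_eq_div, one_le_div hu]
      exact hKu h hh
    simpa using mul_le_mul_of_nonneg_left h1 hr0.le

section LpDual

variable {X : Type*} [MeasurableSpace X] {μ : Measure X} [IsFiniteMeasure μ] {p : ℝ≥0∞}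

theorem indicatorConstLp_biUnion_finset {A : ℕ → Set X} (hA : ∀ i, MeasurableSet (A i))
    (hdisj : Pairwise (Function.onFun Disjoint A)) (t : Finset ℕ) :
    indicatorConstLp p (t.measurableSet_biUnion fun i _ => hA i) (measure_ne_top μ _) (1 : ℝ) =
      ∑ i ∈ t, indicatorConstLp p (hA i) (measure_ne_top μ _) 1 := by
  induction t using Finset.induction_on with
  | empty => simp
  | insert i t hi ih =>
    have hit : Disjoint (A i) (⋃ j ∈ t, A j) :=
      disjoint_iUnion₂_right.2 fun j hj => hdisj (ne_of_mem_of_not_mem hj hi).symm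
    simp only [Finset.set_biUnion_insert]
    rw [Finset.sum_insert hi, ← ih, indicatorConstLp_disjoint_union (hA i) _ _ _ hit]

theorem hasSum_indicatorConstLp_iUnion [Fact (1 ≤ p)] (hp : p ≠ ∞) {A : ℕ → Set X}
    (hA : ∀ i, MeasurableSet (A i)) (hdisj : Pairwise (Function.onFun Disjoint A)) :
    HasSum (fun i => indicatorConstLp p (hA i) (measure_ne_top μ _) (1 : ℝ))
      (indicatorConstLp p (MeasurableSet.iUnion hA) (measure_ne_top μ _) 1) := by
  have hsum : ∑' i, μ (A i) ≠ ∞ := by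
    rw [← measure_iUnion hdisj hA]
    exact measure_ne_top μ _
  simp only [HasSum, SummationFilter.unconditional_filter,
    ← indicatorConstLp_biUnion_finset hA hdisj]
  refine tendsto_indicatorConstLp_set hp ?_
  refine tendsto_of_tendsto_of_tendsto_of_le_of_le tendsto_const_nhds
    (ENNReal.tendsto_tsum_compl_atTop_zero hsum) (fun _ => zero_le) fun t => ?_
  refine (measure_mono ?_).trans (measure_iUnion_le fun i : {i // i ∉ t} => A i)
  rintro x (⟨hx, hx'⟩ | ⟨hx, hx'⟩)
  · obtain ⟨i, _, hi⟩ := mem_iUnion₂.1 hx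
    exact absurd (mem_iUnion_of_mem i hi) hx'
  · obtain ⟨i, hi⟩ := mem_iUnion.1 hx
    exact mem_iUnion.2 ⟨⟨i, fun hit => hx' (mem_iUnion₂_of_mem hit hi)⟩, hi⟩

theorem exists_density_of_nonneg_dual [Fact (1 ≤ p)] (hp : p ≠ ∞) (ψ : StrongDual ℝ (Lp ℝ p μ))
    (hψ : ∀ A (hA : MeasurableSet A), 0 ≤ ψ (indicatorConstLp p hA (measure_ne_top μ A) 1)) :
    ∃ g : X → ℝ≥0∞, Measurable g ∧ ∀ A (hA : MeasurableSet A),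
      ∫⁻ x in A, g x ∂μ = ENNReal.ofReal (ψ (indicatorConstLp p hA (measure_ne_top μ A) 1)) := by
  let ν : Measure X := Measure.ofMeasurable
    (fun A hA => ENNReal.ofReal (ψ (indicatorConstLp p hA (measure_ne_top μ A) 1))) (by simp)
    fun A hA hdisj => by
      have h := (hasSum_indicatorConstLp_iUnion hp hA hdisj).mapL ψ
      rw [← h.tsum_eq, ENNReal.ofReal_tsum_of_nonneg (fun i => hψ _ (hA i)) h.summable]
  have hν : ∀ A (hA : MeasurableSet A),
      ν A = ENNReal.ofReal (ψ (indicatorConstLp p hA (measure_ne_top μ A) 1)) :=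
    fun A hA => Measure.ofMeasurable_apply A hA
  have : IsFiniteMeasure ν := ⟨by rw [hν _ MeasurableSet.univ]; exact ENNReal.ofReal_lt_top⟩
  have hac : ν ≪ μ := Measure.AbsolutelyContinuous.mk fun A hA hA0 => by
    have hp0 : p ≠ 0 := (zero_lt_one.trans_le Fact.out).ne'
    have hzero : indicatorConstLp p hA (measure_ne_top μ A) (1 : ℝ) = 0 := by
      rw [← norm_eq_zero, norm_indicatorConstLp hp0 hp, measureReal_def, hA0, ENNReal.toReal_zero,
        Real.zero_rpow (one_div_ne_zero (ENNReal.toReal_ne_zero.2 ⟨hp0, hp⟩)), mul_zero]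
    rw [hν A hA, hzero, map_zero, ENNReal.ofReal_zero]
  refine ⟨ν.rnDeriv μ, Measure.measurable_rnDeriv _ _, fun A hA => ?_⟩
  rw [Measure.setLIntegral_rnDeriv hac, hν A hA]

end LpDual

section SimpleLp

variable {X : Type*} [MeasurableSpace X]

/-- The class in `Lᵖ(μ)` of a nonnegative simple function, `μ` being finite. -/
noncomputable def simpleLp (p : ℝ≥0∞) (μ : Measure X) [IsFiniteMeasure μ]
    (f : SimpleFunc X ℝ≥0) : Lp ℝ p μ :=
  ((f.map ((↑) : ℝ≥0 → ℝ)).memLp_of_isFiniteMeasure p μ).toLp _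

variable {μ : Measure X} [IsFiniteMeasure μ] {p : ℝ≥0∞}

theorem simpleLp_add (f g : SimpleFunc X ℝ≥0) :
    simpleLp p μ (f + g) = simpleLp p μ f + simpleLp p μ g := by
  rw [simpleLp, simpleLp, simpleLp, ← MemLp.toLp_add]
  exact MemLp.toLp_congr _ _ (Eventually.of_forall fun x => by simp)

theorem simpleLp_smul (c : ℝ≥0) (f : SimpleFunc X ℝ≥0) :
    simpleLp p μ (c • f) = (c : ℝ) • simpleLp p μ f := by
  rw [simpleLp, simpleLp, ← MemLp.toLp_const_smul]
  exact MemLp.toLp_congr _ _ (Eventually.of_forall fun x => by simp)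

theorem simpleLp_piecewise_const (c : ℝ≥0) {A : Set X} (hA : MeasurableSet A) :
    simpleLp p μ (SimpleFunc.piecewise A hA (SimpleFunc.const X c) (SimpleFunc.const X 0)) =
      (c : ℝ) • indicatorConstLp p hA (measure_ne_top μ A) 1 := by
  rw [simpleLp, indicatorConstLp, ← MemLp.toLp_const_smul]
  refine MemLp.toLp_congr _ _ (Eventually.of_forall fun x => ?_)
  by_cases hx : x ∈ A <;> simp [hx]

theorem enorm_simpleLp {s : ℝ} (hs : 0 < s) (f : SimpleFunc X ℝ≥0) :
    ‖simpleLp (ENNReal.ofReal s) μ f‖ₑ = (∫⁻ x, (f x : ℝ≥0∞) ^ s ∂μ) ^ (1 / s) := by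
  rw [simpleLp, Lp.enorm_toLp, eLpNorm_eq_lintegral_rpow_enorm_toReal (by simpa using hs)
    ENNReal.ofReal_ne_top, ENNReal.toReal_ofReal hs.le]
  simp

theorem lintegral_simpleFunc_mul_of_dual [Fact (1 ≤ p)] {ψ : StrongDual ℝ (Lp ℝ p μ)}
    (hψ : ∀ A (hA : MeasurableSet A), 0 ≤ ψ (indicatorConstLp p hA (measure_ne_top μ A) 1))
    {g : X → ℝ≥0∞} (hg : Measurable g) (hgψ : ∀ A (hA : MeasurableSet A),
      ∫⁻ x in A, g x ∂μ = ENNReal.ofReal (ψ (indicatorConstLp p hA (measure_ne_top μ A) 1)))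
    (f : SimpleFunc X ℝ≥0) :
    0 ≤ ψ (simpleLp p μ f) ∧ ∫⁻ x, f x * g x ∂μ = ENNReal.ofReal (ψ (simpleLp p μ f)) := by
  induction f using SimpleFunc.induction with
  | @const c A hA =>
    rw [simpleLp_piecewise_const, map_smul, smul_eq_mul]
    refine ⟨mul_nonneg c.coe_nonneg (hψ A hA), ?_⟩
    have hpt : ∀ x, (SimpleFunc.piecewise A hA (SimpleFunc.const X c) (SimpleFunc.const X 0) x :
        ℝ≥0∞) * g x = A.indicator (fun x => c * g x) x := fun x => by
      by_cases hx : x ∈ A <;> simp [hx]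
    simp only [hpt]
    rw [lintegral_indicator hA, lintegral_const_mul _ hg, hgψ A hA, ENNReal.ofReal_mul c.coe_nonneg,
      ENNReal.ofReal_coe_nnreal]
  | @add f₁ f₂ _ h₁ h₂ =>
    rw [simpleLp_add, map_add]
    refine ⟨add_nonneg h₁.1 h₂.1, ?_⟩
    simp only [SimpleFunc.coe_add, Pi.add_apply, ENNReal.coe_add, add_mul]
    have hmeas : Measurable fun x => (f₁ x : ℝ≥0∞) * g x :=
      f₁.measurable.coe_nnreal_ennreal.mul hg
    rw [lintegral_add_left hmeas, h₁.2, h₂.2,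
      ENNReal.ofReal_add h₁.1 h₂.1]

end SimpleLp

section Duality

variable {X : Type*} [MeasurableSpace X] {μ : Measure X} {s q : ℝ}

lemma lintegral_simpleFunc_rpow_le_one [IsFiniteMeasure μ] (hsq : s.HolderConjugate q)
    {g : X → ℝ≥0∞}
    (h : ∀ f : SimpleFunc X ℝ≥0,
      ∫⁻ x, f x * g x ∂μ ≤ (∫⁻ x, (f x : ℝ≥0∞) ^ s ∂μ) ^ (1 / s))
    {φ : SimpleFunc X ℝ≥0} (hφ : ∀ x, φ x ≤ g x) :
    ∫⁻ x, (φ x : ℝ≥0∞) ^ q ∂μ ≤ 1 := by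
  let f : SimpleFunc X ℝ≥0 := φ.map (· ^ (q - 1))
  have hf : ∀ x, (f x : ℝ≥0∞) = (φ x : ℝ≥0∞) ^ (q - 1) := fun x =>
    ENNReal.coe_rpow_of_nonneg _ hsq.symm.sub_one_pos.le
  have hfs : ∀ x, (f x : ℝ≥0∞) ^ s = (φ x : ℝ≥0∞) ^ q := fun x => by
    rw [hf, ← ENNReal.rpow_mul, hsq.symm.sub_one_mul_conj]
  have hfg : ∀ x, (φ x : ℝ≥0∞) ^ q ≤ f x * g x := fun x => by
    calc (φ x : ℝ≥0∞) ^ q = f x * φ x := by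
          rw [hf, ← ENNReal.rpow_one (φ x : ℝ≥0∞), ← ENNReal.rpow_mul, ← ENNReal.rpow_mul, one_mul,
            one_mul, ← ENNReal.rpow_add_of_nonneg _ _ hsq.symm.sub_one_pos.le zero_le_one,
            sub_add_cancel]
      _ ≤ f x * g x := by
          gcongr
          exact hφ x
  have hle : ∫⁻ x, (φ x : ℝ≥0∞) ^ q ∂μ ≤ (∫⁻ x, (φ x : ℝ≥0∞) ^ q ∂μ) ^ (1 / s) := by
    calc ∫⁻ x, (φ x : ℝ≥0∞) ^ q ∂μ ≤ ∫⁻ x, f x * g x ∂μ := lintegral_mono hfg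
      _ ≤ (∫⁻ x, (f x : ℝ≥0∞) ^ s ∂μ) ^ (1 / s) := h f
      _ = _ := by simp only [hfs]
  have hfin : ∫⁻ x, (φ x : ℝ≥0∞) ^ q ∂μ ≠ ∞ := by
    have := enorm_simpleLp (μ := μ) hsq.pos f ▸ enorm_ne_top
    simpa only [hfs, Ne, one_div, ENNReal.rpow_eq_top_iff_of_pos (inv_pos.2 hsq.pos)] using this
  by_contra! hgt
  have hlt := ENNReal.rpow_lt_rpow_of_exponent_lt hgt hfin ((div_lt_one hsq.pos).2 hsq.lt)
  rw [ENNReal.rpow_one] at hlt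
  exact hle.not_gt hlt

theorem lintegral_rpow_le_one_of_simpleFunc [IsFiniteMeasure μ] (hsq : s.HolderConjugate q)
    {g : X → ℝ≥0∞} (hg : Measurable g)
    (h : ∀ f : SimpleFunc X ℝ≥0,
      ∫⁻ x, f x * g x ∂μ ≤ (∫⁻ x, (f x : ℝ≥0∞) ^ s ∂μ) ^ (1 / s)) :
    ∫⁻ x, g x ^ q ∂μ ≤ 1 := by
  have hq : 0 < q := hsq.symm.pos
  let φ : ℕ → X → ℝ≥0∞ := fun j => SimpleFunc.eapprox g j
  have hφ : ∀ j, ∫⁻ x, φ j x ^ q ∂μ ≤ 1 := fun j => by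
    have hcoe : ∀ x, (((SimpleFunc.eapprox g j).map ENNReal.toNNReal x : ℝ≥0) : ℝ≥0∞) = φ j x :=
      fun x => ENNReal.coe_toNNReal (SimpleFunc.eapprox_lt_top g j x).ne
    simpa only [hcoe] using lintegral_simpleFunc_rpow_le_one hsq h fun x =>
      (hcoe x).trans_le ((le_iSup (fun j => φ j x) j).trans_eq (SimpleFunc.iSup_eapprox_apply hg x))
  calc ∫⁻ x, g x ^ q ∂μ = ∫⁻ x, ⨆ j, φ j x ^ q ∂μ := by
        refine lintegral_congr fun x => ?_
        rw [← SimpleFunc.iSup_eapprox_apply hg x]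
        exact (ENNReal.orderIsoRpow q hq).map_iSup _
    _ = ⨆ j, ∫⁻ x, φ j x ^ q ∂μ :=
        lintegral_iSup (fun j => (SimpleFunc.measurable _).pow_const q)
          fun i j hij x => ENNReal.rpow_le_rpow (SimpleFunc.monotone_eapprox g hij x) hq.le
    _ ≤ 1 := iSup_le hφ

/-- The `s`-modulus, relative to the reference measure `μ`, of a family `E` of measures. A family
of surfaces is represented by the surface measures of its members. -/
noncomputable def measureModulus (μ : Measure X) (s : ℝ) (E : Set (Measure X)) : ℝ≥0∞ :=
  ⨅ σ ∈ {σ : X → ℝ≥0∞ | Measurable σ ∧ ∀ ν ∈ E, 1 ≤ ∫⁻ x, σ x ∂ν}, ∫⁻ x, σ x ^ s ∂μ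

theorem measureModulus_le {E : Set (Measure X)} {σ : X → ℝ≥0∞} (hσ : Measurable σ)
    (hE : ∀ ν ∈ E, 1 ≤ ∫⁻ x, σ x ∂ν) : measureModulus μ s E ≤ ∫⁻ x, σ x ^ s ∂μ :=
  iInf₂_le σ ⟨hσ, hE⟩

/-- The nonnegative simple functions that are admissible for a family `E` of measures. -/
def simpleAdmissible (E : Set (Measure X)) : Set (SimpleFunc X ℝ≥0) :=
  {f | ∀ ν ∈ E, 1 ≤ ∫⁻ x, f x ∂ν}

theorem add_mem_simpleAdmissible {E : Set (Measure X)} {f : SimpleFunc X ℝ≥0}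
    (hf : f ∈ simpleAdmissible E) (g : SimpleFunc X ℝ≥0) : f + g ∈ simpleAdmissible E :=
  fun ν hν => (hf ν hν).trans (lintegral_mono fun x => by simp)

theorem convex_simpleLp_image_simpleAdmissible [IsFiniteMeasure μ] {p : ℝ≥0∞}
    (E : Set (Measure X)) : Convex ℝ (simpleLp p μ '' simpleAdmissible E) := by
  rintro _ ⟨f, hf, rfl⟩ _ ⟨g, hg, rfl⟩ a b ha hb hab
  lift a to ℝ≥0 using ha
  lift b to ℝ≥0 using hb
  refine ⟨a • f + b • g, fun ν hν => ?_, by rw [simpleLp_add, simpleLp_smul, simpleLp_smul]⟩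
  have hmeas : ∀ (c : ℝ≥0) (f : SimpleFunc X ℝ≥0), Measurable fun x => (c * f x : ℝ≥0∞) :=
    fun c f => f.measurable.coe_nnreal_ennreal.const_mul _
  calc (1 : ℝ≥0∞) = a * 1 + b * 1 := by
        rw [mul_one, mul_one]
        exact_mod_cast hab.symm
    _ ≤ a * ∫⁻ x, f x ∂ν + b * ∫⁻ x, g x ∂ν := by gcongr <;> [exact hf ν hν; exact hg ν hν]
    _ = ∫⁻ x, (a * f x + b * g x) ∂ν := by
        rw [lintegral_add_left (hmeas a f), lintegral_const_mul' _ _ ENNReal.coe_ne_top,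
          lintegral_const_mul' _ _ ENNReal.coe_ne_top]
    _ = _ := by simp

theorem exists_nonneg_dual_le [IsFiniteMeasure μ] {p : ℝ≥0∞} [Fact (1 ≤ p)]
    {E : Set (Measure X)} {r : ℝ}
    (hr : ∀ f ∈ simpleAdmissible E, r ≤ ‖simpleLp p μ f‖) :
    ∃ ψ : StrongDual ℝ (Lp ℝ p μ), ‖ψ‖ ≤ 1 ∧
      (∀ A (hA : MeasurableSet A), 0 ≤ ψ (indicatorConstLp p hA (measure_ne_top μ A) 1)) ∧
      ∀ f ∈ simpleAdmissible E, r ≤ ψ (simpleLp p μ f) := by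
  rcases (simpleAdmissible E).eq_empty_or_nonempty with hE | ⟨f, hf⟩
  · exact ⟨0, by simp, by simp, by simp [hE]⟩
  obtain ⟨ψ, hψ, hrψ⟩ := exists_strongDual_norm_le_one_of_convex
    (convex_simpleLp_image_simpleAdmissible (p := p) E) (r := r) (by simpa using hr)
  refine ⟨ψ, hψ, fun A hA => ?_, fun f hf => hrψ _ (mem_image_of_mem _ hf)⟩
  set a := ψ (indicatorConstLp p hA (measure_ne_top μ A) 1)
  have hray : ∀ t : ℝ≥0, r ≤ ψ (simpleLp p μ f) + t * a := fun t => by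
    have := hrψ _ (mem_image_of_mem _ (add_mem_simpleAdmissible hf
      (SimpleFunc.piecewise A hA (SimpleFunc.const X t) (SimpleFunc.const X 0))))
    rwa [simpleLp_add, simpleLp_piecewise_const, map_add, map_smul] at this
  by_contra! ha
  have hgap : 0 ≤ ψ (simpleLp p μ f) - r := by linarith [hrψ _ (mem_image_of_mem _ hf)]
  have hneg := hray (Real.toNNReal ((ψ (simpleLp p μ f) - r + 1) / -a))
  rw [Real.coe_toNNReal _ (div_nonneg (by linarith) (by linarith)), div_neg, neg_mul,
    div_mul_cancel₀ _ ha.ne] at hneg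
  linarith

theorem exists_dual_density [IsFiniteMeasure μ] (hsq : s.HolderConjugate q)
    {E : Set (Measure X)} {r : ℝ≥0} (hr : (r : ℝ≥0∞) ^ s ≤ measureModulus μ s E) :
    ∃ g : X → ℝ≥0∞, Measurable g ∧ ∫⁻ x, g x ^ q ∂μ ≤ 1 ∧
      ∀ f ∈ simpleAdmissible E, (r : ℝ≥0∞) ≤ ∫⁻ x, f x * g x ∂μ := by
  have : Fact (1 ≤ ENNReal.ofReal s) := ⟨by simpa using hsq.lt.le⟩
  have hnorm : ∀ f : SimpleFunc X ℝ≥0,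
      ENNReal.ofReal ‖simpleLp (ENNReal.ofReal s) μ f‖ = (∫⁻ x, (f x : ℝ≥0∞) ^ s ∂μ) ^ (1 / s) :=
    fun f => by rw [ofReal_norm, enorm_simpleLp hsq.pos]
  have hrK : ∀ f ∈ simpleAdmissible E, (r : ℝ) ≤ ‖simpleLp (ENNReal.ofReal s) μ f‖ := by
    intro f hf
    rw [← ENNReal.ofReal_le_ofReal_iff (norm_nonneg _), hnorm, ENNReal.ofReal_coe_nnreal,
      one_div, ENNReal.le_rpow_inv_iff hsq.pos]
    exact hr.trans (measureModulus_le f.measurable.coe_nnreal_ennreal hf)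
  obtain ⟨ψ, hψ1, hψ0, hψr⟩ := exists_nonneg_dual_le hrK
  obtain ⟨g, hg, hgψ⟩ := exists_density_of_nonneg_dual ENNReal.ofReal_ne_top ψ hψ0
  have hfg := fun f => (lintegral_simpleFunc_mul_of_dual hψ0 hg hgψ f).2
  refine ⟨g, hg, lintegral_rpow_le_one_of_simpleFunc hsq hg fun f => ?_, fun f hf => ?_⟩
  · rw [hfg, ← hnorm]
    exact ENNReal.ofReal_le_ofReal ((Real.le_norm_self _).trans (by
      simpa using ψ.le_of_opNorm_le hψ1 (simpleLp (ENNReal.ofReal s) μ f)))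
  · rw [hfg, ← ENNReal.ofReal_coe_nnreal]
    exact ENNReal.ofReal_le_ofReal (hψr f hf)

theorem exists_dual_density_restrict (hsq : s.HolderConjugate q) {K : Set X}
    (hK : MeasurableSet K) (hμK : μ K ≠ ∞) {E : Set (Measure X)} {r : ℝ≥0}
    (hr : (r : ℝ≥0∞) ^ s ≤ measureModulus (μ.restrict K) s E) :
    ∃ g : X → ℝ≥0∞, Measurable g ∧ ∫⁻ x, g x ^ q ∂μ ≤ 1 ∧
      ∀ f ∈ simpleAdmissible E, (r : ℝ≥0∞) ≤ ∫⁻ x, f x * g x ∂μ := by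
  have : IsFiniteMeasure (μ.restrict K) := isFiniteMeasure_restrict.2 hμK
  obtain ⟨g, hg, hgq, hrg⟩ := exists_dual_density hsq hr
  refine ⟨K.indicator g, hg.indicator hK, ?_, fun f hf => (hrg f hf).trans_eq ?_⟩
  · rw [← lintegral_indicator hK] at hgq
    refine le_of_eq_of_le (lintegral_congr fun x => ?_) hgq
    simp [indicator_apply, ite_pow, hsq.symm.pos]
  · rw [← lintegral_indicator hK]
    simp only [indicator_mul_right]

end Duality

section Curves

variable {n : ℕ} {γ : ℝ → Eucl n}

theorem edist_le_hausdorffMeasure_image_Ico {s t : ℝ} (hst : s ≤ t)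
    (hγ : ContinuousOn γ (Icc s t)) : edist (γ s) (γ t) ≤ μH[(1 : ℝ)] (γ '' Ico s t) := by
  have hlip : LipschitzWith 1 fun y => dist y (γ s) := LipschitzWith.dist_left _
  have hsub : Ico 0 (dist (γ t) (γ s)) ⊆ (fun y => dist y (γ s)) '' (γ '' Ico s t) := by
    intro v hv
    obtain ⟨u, hu, rfl⟩ := intermediate_value_Icc hst (hlip.continuous.comp_continuousOn hγ)
      (by simpa using Ico_subset_Icc_self hv)
    exact ⟨γ u, ⟨u, ⟨hu.1, hu.2.lt_of_ne (by rintro rfl; exact lt_irrefl _ hv.2)⟩, rfl⟩, rfl⟩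
  calc edist (γ s) (γ t) = volume (Ico 0 (dist (γ t) (γ s))) := by
        rw [Real.volume_Ico, sub_zero, dist_comm, edist_dist]
    _ ≤ μH[(1 : ℝ)] ((fun y => dist y (γ s)) '' (γ '' Ico s t)) := by
        rw [hausdorffMeasure_real]
        exact measure_mono hsub
    _ ≤ μH[(1 : ℝ)] (γ '' Ico s t) := by
        simpa using hlip.hausdorffMeasure_image_le zero_le_one (γ '' Ico s t)

lemma measurableSet_image_Ico {s t : ℝ} (hγ : ContinuousOn γ (Icc s t)) :
    MeasurableSet (γ '' Ico s t) := by
  have hK : MeasurableSet (γ '' Icc s t) :=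
    (isCompact_Icc.image_of_continuousOn hγ).measurableSet
  rcases lt_or_ge t s with hts | hst
  · simp [Ico_eq_empty hts.le.not_gt]
  have hinsert : γ '' Icc s t = insert (γ t) (γ '' Ico s t) := by
    rw [← Ico_insert_right hst, image_insert_eq]
  by_cases ht : γ t ∈ γ '' Ico s t
  · rwa [hinsert, insert_eq_of_mem ht] at hK
  · rw [← insert_sdiff_self_of_notMem ht, ← hinsert]
    exact hK.diff (measurableSet_singleton _)

lemma sum_indicator_image_le_curveMult {T : ℕ → Set ℝ} (hT : Pairwise (Function.onFun Disjoint T))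
    {I : Finset ℕ} (hI : ∀ i ∈ I, T i ⊆ Icc 0 1) (y : Eucl n) :
    ∑ i ∈ I, (γ '' T i).indicator 1 y ≤ curveMult γ y := by
  choose! τ hτT hτ using fun i (hi : y ∈ γ '' T i) => hi
  set J := {i ∈ I | y ∈ γ '' T i}
  have hinj : InjOn τ (J : Set ℕ) := by
    intro i hi j hj hij
    by_contra hne
    exact disjoint_left.1 (hT hne) (hτT i (Finset.mem_filter.1 hi).2)
      (hij ▸ hτT j (Finset.mem_filter.1 hj).2)
  have hcard : (J : Set ℕ).encard ≤ {t ∈ Icc (0 : ℝ) 1 | γ t = y}.encard := by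
    rw [← hinj.encard_image]
    refine encard_le_encard ?_
    rintro _ ⟨i, hi, rfl⟩
    obtain ⟨hiI, hiy⟩ := Finset.mem_filter.1 hi
    exact ⟨hI i hiI (hτT i hiy), hτ i hiy⟩
  calc ∑ i ∈ I, (γ '' T i).indicator (1 : Eucl n → ℝ≥0∞) y = ((J : Set ℕ).encard : ℕ∞) := by
        rw [encard_coe_eq_coe_finsetCard]
        simp [J, indicator_apply]
    _ ≤ curveMult γ y := ENat.toENNReal_le.2 hcard

theorem sum_edist_mul_le_curveInt (hγ : ContinuousOn γ (Icc 0 1)) {u : ℕ → ℝ} (hu : Monotone u)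
    {N : ℕ} (hu0 : 0 ≤ u 0) (huN : u N ≤ 1) {m : ℕ → ℝ≥0∞} {ρ : Eucl n → ℝ≥0∞}
    (hm : ∀ i < N, ∀ t ∈ Icc (u i) (u (i + 1)), m i ≤ ρ (γ t)) :
    ∑ i ∈ Finset.range N, edist (γ (u i)) (γ (u (i + 1))) * m i ≤ curveInt γ ρ := by
  set T : ℕ → Set ℝ := fun i => Ico (u i) (u (i + 1))
  have hsub : ∀ i ∈ Finset.range N, Icc (u i) (u (i + 1)) ⊆ Icc 0 1 := fun i hi =>
    Icc_subset_Icc (hu0.trans (hu i.zero_le)) ((hu (Finset.mem_range.1 hi)).trans huN)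
  have hmeas : ∀ i ∈ Finset.range N, MeasurableSet (γ '' T i) := fun i hi =>
    measurableSet_image_Ico (hγ.mono (hsub i hi))
  calc ∑ i ∈ Finset.range N, edist (γ (u i)) (γ (u (i + 1))) * m i
      ≤ ∑ i ∈ Finset.range N, ∫⁻ y, (γ '' T i).indicator (fun _ => m i) y ∂μH[(1 : ℝ)] := by
        refine Finset.sum_le_sum fun i hi => ?_
        rw [lintegral_indicator_const (hmeas i hi), mul_comm]
        gcongr
        exact edist_le_hausdorffMeasure_image_Ico (hu i.le_succ) (hγ.mono (hsub i hi))
    _ = ∫⁻ y, ∑ i ∈ Finset.range N, (γ '' T i).indicator (fun _ => m i) y ∂μH[(1 : ℝ)] :=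
        (lintegral_finsetSum' _ fun i hi =>
          (measurable_const.indicator (hmeas i hi)).aemeasurable).symm
    _ ≤ ∫⁻ y, ρ y * ∑ i ∈ Finset.range N, (γ '' T i).indicator 1 y ∂μH[(1 : ℝ)] := by
        refine lintegral_mono fun y => ?_
        rw [Finset.mul_sum]
        refine Finset.sum_le_sum fun i hi => ?_
        by_cases hy : y ∈ γ '' T i
        · simp only [indicator_of_mem hy, Pi.one_apply, mul_one]
          obtain ⟨t, ht, rfl⟩ := hy
          exact hm i (Finset.mem_range.1 hi) t (Ico_subset_Icc_self ht)
        · simp only [indicator_of_notMem hy, zero_le]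
    _ ≤ curveInt γ ρ := lintegral_mono fun y => mul_le_mul_right
        (sum_indicator_image_le_curveMult hu.pairwise_disjoint_on_Ico_succ
          (fun i hi => Ico_subset_Icc_self.trans (hsub i hi)) y) _

lemma exists_forall_dist_lt_of_mem_Icc_div (hγ : ContinuousOn γ (Icc 0 1)) {η : ℝ} (hη : 0 < η) :
    ∃ N : ℕ, 0 < N ∧ ∀ i < N, ∀ t ∈ Icc ((i : ℝ) / N) ((i + 1 : ℕ) / N),
      dist (γ (i / N)) (γ t) < η := by
  obtain ⟨δ, hδ, hosc⟩ := Metric.uniformContinuousOn_iff.1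
    (isCompact_Icc.uniformContinuousOn_of_continuous hγ) η hη
  obtain ⟨m, hm⟩ := exists_nat_one_div_lt hδ
  refine ⟨m + 1, m.succ_pos, fun i hi t ht => ?_⟩
  have hlen : ((i + 1 : ℕ) : ℝ) / (m + 1 : ℕ) = i / (m + 1 : ℕ) + 1 / (m + 1) := by
    push_cast
    ring
  have hle : ((i + 1 : ℕ) : ℝ) / (m + 1 : ℕ) ≤ 1 :=
    div_le_one_of_le₀ (by exact_mod_cast hi) (by positivity)
  have h0 : 0 ≤ (i : ℝ) / (m + 1 : ℕ) := by positivity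
  refine hosc _ ⟨h0, (ht.1.trans ht.2).trans hle⟩ _ ⟨h0.trans ht.1, ht.2.trans hle⟩ ?_
  rw [Real.dist_eq, abs_sub_comm, abs_of_nonneg (sub_nonneg.2 ht.1)]
  linarith [ht.2]

end Curves

section Separation

lemma exists_mem_frontier_of_isPreconnected {X : Type*} [TopologicalSpace X] {s u : Set X}
    (hs : IsPreconnected s) (hu : IsOpen u) (hsu : (s ∩ u).Nonempty) (hns : ¬ s ⊆ u) :
    ∃ x ∈ s, x ∈ frontier u := by
  by_contra! h
  refine hns (hs.subset_of_closure_inter_subset hu hsu fun x hx => ?_)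
  by_contra hxu
  exact h x hx.2 (hu.frontier_eq ▸ ⟨hx.1, hxu⟩)

/-- `S` contains the boundary of an open set which contains every translate of `A` by a vector of
length less than `ε` and misses every such translate of `B`. -/
structure Separates {k : ℕ} (A B : Set (Eucl k)) (ε : ℝ) (S : Set (Eucl k)) : Prop where
  measurableSet : MeasurableSet S
  exists_isOpen : ∃ U, IsOpen U ∧ frontier U ⊆ S ∧ thickening ε A ⊆ U ∧ Disjoint (thickening ε B) U

variable {k : ℕ} {A B : Set (Eucl (k + 1))} {ε : ℝ} {S : Set (Eucl (k + 1))}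

lemma add_mem_thickening {a z : Eucl (k + 1)} (ha : a ∈ A) (hz : z ∈ ball 0 ε) :
    z + a ∈ thickening ε A :=
  mem_thickening_iff.2 ⟨a, ha, by simpa using hz⟩

theorem Separates.exists_mem_segmentHits (hS : Separates A B ε S) {N : ℕ} {a : ℕ → Eucl (k + 1)}
    (h0 : a 0 ∈ A) (hN : a N ∈ B) {z : Eucl (k + 1)} (hz : z ∈ ball 0 ε) :
    ∃ i < N, a i ≠ a (i + 1) ∧ z ∈ segmentHits (a i) (a (i + 1)) S := by
  obtain ⟨U, hU, hUS, hAU, hBU⟩ := hS.exists_isOpen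
  obtain ⟨i, hi, hin, hout⟩ : ∃ i < N, z + a i ∈ U ∧ z + a (i + 1) ∉ U := by
    by_contra! hstep
    have hall : ∀ i ≤ N, z + a i ∈ U := by
      intro i
      induction i with
      | zero => exact fun _ => hAU (add_mem_thickening h0 hz)
      | succ j ih => exact fun hj => hstep j hj (ih (Nat.le_of_succ_le hj))
    exact disjoint_left.1 hBU (add_mem_thickening hN hz) (hall N le_rfl)
  have hconn : IsPreconnected ((z + ·) '' segment ℝ (a i) (a (i + 1))) :=
    (convex_segment _ _).isPreconnected.image _ (by fun_prop)
  obtain ⟨_, ⟨x, hx, rfl⟩, hxU⟩ := exists_mem_frontier_of_isPreconnected hconn hU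
    ⟨_, mem_image_of_mem _ (left_mem_segment ℝ _ _), hin⟩
    fun hsub => hout (hsub (mem_image_of_mem _ (right_mem_segment ℝ _ _)))
  exact ⟨i, hi, fun h => hout (h ▸ hin), x, hx, hUS hxU⟩

lemma segmentHits_inter_ball_subset {η : ℝ} {a b : Eucl (k + 1)} (hab : dist a b < η) :
    ball 0 ε ∩ segmentHits a b S ⊆ segmentHits a b (S ∩ ball a (ε + η)) := by
  rintro z ⟨hz, x, hx, hzx⟩
  refine ⟨x, hx, hzx, ?_⟩
  have hxa : dist x a ≤ dist a b := (convex_closedBall a (dist a b)).segment_subset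
    (mem_closedBall_self dist_nonneg) (by rw [mem_closedBall, dist_comm]) hx
  have hzx : dist (z + x) x < ε := by simpa using hz
  exact (dist_triangle _ x _).trans_lt (by linarith)

theorem Separates.mul_volume_ball_le_sum (hS : Separates A B ε S) {N : ℕ} {a : ℕ → Eucl (k + 1)}
    (h0 : a 0 ∈ A) (hN : a N ∈ B) {η : ℝ} (ha : ∀ i < N, dist (a i) (a (i + 1)) < η) :
    hausdorffConst k * volume (ball (0 : Eucl (k + 1)) ε) ≤ ∑ i ∈ Finset.range N,
      edist (a i) (a (i + 1)) * μH[(k : ℝ)] (S ∩ ball (a i) (ε + η)) := by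
  set I := {i ∈ Finset.range N | a i ≠ a (i + 1)}
  set H : ℕ → Set (Eucl (k + 1)) := fun i => segmentHits (a i) (a (i + 1)) (S ∩ ball (a i) (ε + η))
  have hcover : ball (0 : Eucl (k + 1)) ε ⊆ ⋃ i ∈ I, H i := by
    intro z hz
    obtain ⟨i, hi, hne, hzi⟩ := hS.exists_mem_segmentHits h0 hN hz
    exact mem_iUnion₂.2 ⟨i, Finset.mem_filter.2 ⟨Finset.mem_range.2 hi, hne⟩,
      segmentHits_inter_ball_subset (ha i hi) ⟨hz, hzi⟩⟩
  calc hausdorffConst k * volume (ball (0 : Eucl (k + 1)) ε)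
      ≤ hausdorffConst k * ∑ i ∈ I, volume (H i) := by
        gcongr
        exact (measure_mono hcover).trans (measure_biUnion_finset_le _ _)
    _ ≤ ∑ i ∈ I, edist (a i) (a (i + 1)) * μH[(k : ℝ)] (S ∩ ball (a i) (ε + η)) := by
        rw [Finset.mul_sum]
        exact Finset.sum_le_sum fun i hi => volume_segmentHits_le (Finset.mem_filter.1 hi).2
          (hS.measurableSet.inter measurableSet_ball)
    _ ≤ _ := Finset.sum_le_sum_of_subset (Finset.filter_subset _ _)

end Separation

section AveragedDensity

lemma lintegral_setLIntegral_ball {n : ℕ} (R : ℝ) {F : Eucl n → ℝ≥0∞} (hF : Measurable F) :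
    ∫⁻ y, ∫⁻ x in ball y R, F x = volume (ball (0 : Eucl n) R) * ∫⁻ x, F x := by
  set P : Set (Eucl n × Eucl n) := {z | dist z.2 z.1 < R}
  have hP : Measurable (P.indicator fun z => F z.2) := (hF.comp measurable_snd).indicator
    (measurableSet_lt (by fun_prop) measurable_const)
  calc ∫⁻ y, ∫⁻ x in ball y R, F x = ∫⁻ y, ∫⁻ x, P.indicator (fun z => F z.2) (y, x) := by
        refine lintegral_congr fun y => ?_
        rw [← lintegral_indicator measurableSet_ball]
        rfl
    _ = ∫⁻ x, ∫⁻ y, P.indicator (fun z => F z.2) (y, x) :=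
        lintegral_lintegral_swap hP.aemeasurable
    _ = ∫⁻ x, volume (ball (0 : Eucl n) R) * F x := by
        refine lintegral_congr fun x => ?_
        have hsymm : ∀ y, P.indicator (fun z => F z.2) (y, x) =
            (ball x R).indicator (fun _ => F x) y := fun y => by
          simp only [P, indicator, mem_ball, mem_ofPred_eq, dist_comm]
        simp only [hsymm]
        rw [lintegral_indicator_const measurableSet_ball, Measure.addHaar_ball_center, mul_comm]
    _ = _ := lintegral_const_mul _ hF

lemma measurable_setLIntegral_ball {n : ℕ} (R : ℝ) {F : Eucl n → ℝ≥0∞} (hF : Measurable F) :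
    Measurable fun y => ∫⁻ x in ball y R, F x := by
  simp_rw [← lintegral_indicator measurableSet_ball]
  exact Measurable.lintegral_prod_right ((hF.comp measurable_snd).indicator
    (measurableSet_lt (by fun_prop) measurable_const :
      MeasurableSet {z : Eucl n × Eucl n | dist z.2 z.1 < R}))

lemma lintegral_rpow_le_measure_rpow_mul {X : Type*} [MeasurableSpace X] (μ : Measure X) {q : ℝ}
    (hq : 1 < q) {g : X → ℝ≥0∞} (hg : Measurable g) :
    (∫⁻ x, g x ∂μ) ^ q ≤ μ univ ^ (q - 1) * ∫⁻ x, g x ^ q ∂μ := by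
  have hq0 : q ≠ 0 := (zero_lt_one.trans hq).ne'
  have hexp : 1 / q.conjExponent * q = q - 1 := by
    rw [Real.conjExponent]
    field_simp
  have holder := ENNReal.lintegral_mul_le_Lp_mul_Lq μ (Real.HolderConjugate.conjExponent hq).symm
    (f := 1) aemeasurable_one hg.aemeasurable
  calc (∫⁻ x, g x ∂μ) ^ q
      ≤ (μ univ ^ (1 / q.conjExponent) * (∫⁻ x, g x ^ q ∂μ) ^ (1 / q)) ^ q := by
        gcongr
        simpa using holder
    _ = _ := by
        rw [ENNReal.mul_rpow_of_nonneg _ _ (by linarith), ← ENNReal.rpow_mul, ← ENNReal.rpow_mul,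
          one_div_mul_cancel hq0, ENNReal.rpow_one, hexp]

theorem lintegral_rpow_setLIntegral_ball_le {n : ℕ} (R : ℝ) {q : ℝ} (hq : 1 < q)
    {g : Eucl n → ℝ≥0∞} (hg : Measurable g) :
    ∫⁻ y, (∫⁻ x in ball y R, g x) ^ q ≤ volume (ball (0 : Eucl n) R) ^ q * ∫⁻ x, g x ^ q := by
  set V := volume (ball (0 : Eucl n) R)
  have hV : V ^ (q - 1) ≠ ∞ :=
    ENNReal.rpow_ne_top_of_nonneg (by linarith) measure_ball_lt_top.ne
  calc ∫⁻ y, (∫⁻ x in ball y R, g x) ^ q ≤ ∫⁻ y, V ^ (q - 1) * ∫⁻ x in ball y R, g x ^ q := by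
        refine lintegral_mono fun y => (lintegral_rpow_le_measure_rpow_mul _ hq hg).trans_eq ?_
        rw [Measure.restrict_apply_univ, Measure.addHaar_ball_center]
    _ = V ^ (q - 1) * (V ^ (1 : ℝ) * ∫⁻ x, g x ^ q) := by
        rw [lintegral_const_mul' _ _ hV, lintegral_setLIntegral_ball R (hg.pow_const q),
          ENNReal.rpow_one]
    _ = V ^ q * ∫⁻ x, g x ^ q := by
        rw [← mul_assoc, ← ENNReal.rpow_add_of_nonneg _ _ (by linarith) zero_le_one,
          sub_add_cancel]

end AveragedDensity

section CurveSurfaceDuality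

variable {k : ℕ}

section Weights

variable {X : Type*} [MeasurableSpace X] {μ : Measure X} {E : Set (Measure X)} {g : X → ℝ≥0∞}
  {r : ℝ≥0∞}

lemma mul_le_lintegral_mul_of_simpleAdmissible
    (hr : ∀ f ∈ simpleAdmissible E, r ≤ ∫⁻ x, f x * g x ∂μ) {w : ℝ≥0} {f : SimpleFunc X ℝ≥0}
    (hf : ∀ ν ∈ E, (w : ℝ≥0∞) ≤ ∫⁻ x, f x ∂ν) : w * r ≤ ∫⁻ x, f x * g x ∂μ := by
  rcases eq_or_ne w 0 with rfl | hw
  · simp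
  have hinv : ((w⁻¹ : ℝ≥0) : ℝ≥0∞) = (w : ℝ≥0∞)⁻¹ := ENNReal.coe_inv hw
  have hadm : w⁻¹ • f ∈ simpleAdmissible E := fun ν hν => by
    simp only [SimpleFunc.coe_smul, Pi.smul_apply, smul_eq_mul, ENNReal.coe_mul]
    rw [lintegral_const_mul' _ _ ENNReal.coe_ne_top, hinv,
      ← ENNReal.inv_mul_cancel (ENNReal.coe_ne_zero.2 hw) ENNReal.coe_ne_top]
    gcongr
    exact hf ν hν
  have hle := hr _ hadm
  simp only [SimpleFunc.coe_smul, Pi.smul_apply, smul_eq_mul, ENNReal.coe_mul, mul_assoc] at hle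
  rw [lintegral_const_mul' _ _ ENNReal.coe_ne_top, hinv] at hle
  rwa [ENNReal.mul_le_iff_le_inv (ENNReal.coe_ne_zero.2 hw) ENNReal.coe_ne_top]

lemma mul_le_sum_mul_setLIntegral_of_simpleAdmissible (hg : Measurable g)
    (hr : ∀ f ∈ simpleAdmissible E, r ≤ ∫⁻ x, f x * g x ∂μ) {ι : Type*} {I : Finset ι}
    {c : ι → ℝ≥0} {A : ι → Set X} (hA : ∀ i, MeasurableSet (A i)) {w : ℝ≥0}
    (hE : ∀ ν ∈ E, (w : ℝ≥0∞) ≤ ∑ i ∈ I, c i * ν (A i)) :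
    w * r ≤ ∑ i ∈ I, c i * ∫⁻ x in A i, g x ∂μ := by
  obtain ⟨f, hf⟩ : ∃ f : SimpleFunc X ℝ≥0,
      ∀ x, (f x : ℝ≥0∞) = ∑ i ∈ I, (A i).indicator (fun _ => (c i : ℝ≥0∞)) x := by
    clear hE
    induction I using Finset.induction_on with
    | empty => exact ⟨0, by simp⟩
    | insert i J hi ih =>
      obtain ⟨f, hf⟩ := ih
      refine ⟨.piecewise (A i) (hA i) (.const X (c i)) 0 + f, fun x => ?_⟩
      simp [Finset.sum_insert hi, hf, indicator_apply, apply_ite]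
  calc w * r ≤ ∫⁻ x, f x * g x ∂μ := by
        refine mul_le_lintegral_mul_of_simpleAdmissible hr fun ν hν => ?_
        simp only [hf]
        rw [lintegral_finsetSum _ fun i _ => measurable_const.indicator (hA i)]
        simpa only [lintegral_indicator_const (hA _)] using hE ν hν
    _ = ∫⁻ x, ∑ i ∈ I, (A i).indicator (fun x => c i * g x) x ∂μ := by
        simp only [hf, Finset.sum_mul, indicator_apply, ite_mul, zero_mul]
    _ = _ := by
        rw [lintegral_finsetSum _ fun i _ => (hg.const_mul _).indicator (hA i)]
        simp only [lintegral_indicator (hA _), lintegral_const_mul _ hg]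

end Weights

theorem mul_le_curveInt_setLIntegral_ball {μ : Measure (Eucl (k + 1))}
    {𝒮 : Set (Set (Eucl (k + 1)))} {A B G : Set (Eucl (k + 1))} {ε : ℝ}
    (hsep : ∀ S ∈ 𝒮, Separates A B ε S) {g : Eucl (k + 1) → ℝ≥0∞} (hg : Measurable g) {r : ℝ≥0∞}
    (hr : ∀ f ∈ simpleAdmissible ((μH[(k : ℝ)]).restrict '' 𝒮), r ≤ ∫⁻ x, f x * g x ∂μ)
    {η : ℝ} (hη : 0 < η) {γ : ℝ → Eucl (k + 1)} (hγ : γ ∈ curveJoin A B G) :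
    hausdorffConst k * volume (ball (0 : Eucl (k + 1)) ε) * r ≤
      curveInt γ fun y => ∫⁻ x in ball y (ε + 2 * η), g x ∂μ := by
  obtain ⟨hγc, hγA, hγB, -⟩ := hγ
  obtain ⟨N, hN, hosc⟩ := exists_forall_dist_lt_of_mem_Icc_div hγc hη
  have hN' : (N : ℝ) ≠ 0 := Nat.cast_ne_zero.2 hN.ne'
  set u : ℕ → ℝ := fun i => i / N
  have hu : Monotone u := fun i j hij => by simp only [u]; gcongr
  set w : ℝ≥0 := hausdorffConst k * (volume (ball (0 : Eucl (k + 1)) ε)).toNNReal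
  have hw : (w : ℝ≥0∞) = hausdorffConst k * volume (ball (0 : Eucl (k + 1)) ε) := by
    rw [ENNReal.coe_mul, ENNReal.coe_toNNReal measure_ball_lt_top.ne]
  have hadm : ∀ ν ∈ (μH[(k : ℝ)]).restrict '' 𝒮, (w : ℝ≥0∞) ≤ ∑ i ∈ Finset.range N,
      nndist (γ (u i)) (γ (u (i + 1))) * ν (ball (γ (u i)) (ε + η)) := by
    rintro _ ⟨S, hS, rfl⟩
    simp only [hw, ← edist_nndist, Measure.restrict_apply measurableSet_ball, inter_comm _ S]
    exact (hsep S hS).mul_volume_ball_le_sum (a := fun i => γ (u i)) (by simpa [u] using hγA)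
      (by simpa [u, hN'] using hγB) fun i hi => hosc i hi _ (right_mem_Icc.2 (hu i.le_succ))
  calc hausdorffConst k * volume (ball (0 : Eucl (k + 1)) ε) * r
      ≤ ∑ i ∈ Finset.range N, edist (γ (u i)) (γ (u (i + 1))) *
          ∫⁻ x in ball (γ (u i)) (ε + η), g x ∂μ := by
        simp only [← hw, edist_nndist]
        exact mul_le_sum_mul_setLIntegral_of_simpleAdmissible hg hr
          (fun _ => measurableSet_ball) hadm
    _ ≤ _ := by
        refine sum_edist_mul_le_curveInt hγc hu (by simp [u]) (by simp [u, hN'])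
          fun i hi t ht => lintegral_mono_set (ball_subset_ball' ?_)
        linarith [hosc i hi t ht]

lemma curveModulus_le {n : ℕ} {q : ℝ} {Γ : Set (ℝ → Eucl n)} {ρ : Eucl n → ℝ≥0∞}
    (hρ : Measurable ρ) (hΓ : ∀ γ ∈ Γ, 1 ≤ curveInt γ ρ) : curveModulus q Γ ≤ ∫⁻ x, ρ x ^ q :=
  iInf₂_le ρ ⟨hρ, hΓ⟩

lemma mul_curveModulus_rpow_le {n : ℕ} {q : ℝ} (hq : 0 < q) {Γ : Set (ℝ → Eucl n)}
    {ρ : Eucl n → ℝ≥0∞} (hρ : Measurable ρ) {w : ℝ≥0∞} (hw : w ≠ ∞)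
    (hΓ : ∀ γ ∈ Γ, w ≤ curveInt γ ρ) :
    w * curveModulus q Γ ^ (1 / q) ≤ (∫⁻ x, ρ x ^ q) ^ (1 / q) := by
  rcases eq_or_ne w 0 with rfl | hw0
  · simp
  have hle : curveModulus q Γ ≤ (w⁻¹) ^ q * ∫⁻ x, ρ x ^ q := by
    rw [← lintegral_const_mul _ (hρ.pow_const q)]
    simp only [← ENNReal.mul_rpow_of_nonneg _ _ hq.le]
    refine curveModulus_le (hρ.const_mul _) fun γ hγ => ?_
    simp only [curveInt, mul_assoc]
    rw [lintegral_const_mul' _ _ (ENNReal.inv_ne_top.2 hw0), ← ENNReal.inv_mul_cancel hw0 hw]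
    gcongr
    exact hΓ γ hγ
  rw [ENNReal.mul_le_iff_le_inv hw0 hw]
  refine (ENNReal.rpow_le_rpow hle (one_div_pos.2 hq).le).trans_eq ?_
  rw [ENNReal.mul_rpow_of_nonneg _ _ (one_div_pos.2 hq).le, ← ENNReal.rpow_mul,
    mul_one_div_cancel hq.ne', ENNReal.rpow_one]

lemma tendsto_volume_ball_add (n : ℕ) {ε : ℝ} (hε : 0 < ε) :
    Tendsto (fun η => volume (ball (0 : Eucl n) (ε + 2 * η))) (𝓝[>] 0)
      (𝓝 (volume (ball (0 : Eucl n) ε))) := by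
  set V := volume (ball (0 : Eucl n) 1)
  have hball : ∀ R > 0, volume (ball (0 : Eucl n) R) = ENNReal.ofReal (R ^ n) * V := fun R hR => by
    rw [Measure.addHaar_ball_of_pos _ _ hR, finrank_euclideanSpace_fin]
  have hlim : Tendsto (fun η : ℝ => ENNReal.ofReal ((ε + 2 * η) ^ n) * V) (𝓝[>] 0)
      (𝓝 (ENNReal.ofReal (ε ^ n) * V)) := by
    refine ENNReal.Tendsto.mul_const (ENNReal.tendsto_ofReal ?_) (Or.inr measure_ball_lt_top.ne)
    have : Continuous fun η : ℝ => (ε + 2 * η) ^ n := by fun_prop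
    simpa using (this.tendsto 0).mono_left nhdsWithin_le_nhds
  rw [hball ε hε]
  refine hlim.congr' ?_
  filter_upwards [self_mem_nhdsWithin] with η (hη : 0 < η)
  rw [hball _ (by positivity)]

variable {A B G : Set (Eucl (k + 1))} {ε M : ℝ} {𝒮 : Set (Set (Eucl (k + 1)))} {s q : ℝ}

lemma mul_curveModulus_rpow_le_one (hsq : s.HolderConjugate q) (hε : 0 < ε)
    (hsep : ∀ S ∈ 𝒮, Separates A B ε S) {r : ℝ≥0}
    (hr : (r : ℝ≥0∞) ^ s ≤
      measureModulus (volume.restrict (ball 0 M)) s ((μH[(k : ℝ)]).restrict '' 𝒮)) :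
    hausdorffConst k * r * curveModulus q (curveJoin A B G) ^ (1 / q) ≤ 1 := by
  obtain ⟨h, hh, hhq, hrh⟩ :=
    exists_dual_density_restrict hsq measurableSet_ball measure_ball_lt_top.ne hr
  set V := volume (ball (0 : Eucl (k + 1)) ε)
  have hbound : ∀ η > 0, hausdorffConst k * V * r * curveModulus q (curveJoin A B G) ^ (1 / q) ≤
      volume (ball (0 : Eucl (k + 1)) (ε + 2 * η)) := fun η hη => by
    have hq0 : 0 < q := hsq.symm.pos
    set R := ε + 2 * η
    set VR := volume (ball (0 : Eucl (k + 1)) R)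
    calc _ ≤ (∫⁻ y, (∫⁻ x in ball y R, h x) ^ q) ^ (1 / q) :=
          mul_curveModulus_rpow_le hq0 (measurable_setLIntegral_ball R hh) (by finiteness)
            fun γ hγ => mul_le_curveInt_setLIntegral_ball hsep hh hrh hη hγ
      _ ≤ (VR ^ q * 1) ^ (1 / q) := by
          gcongr
          exact (lintegral_rpow_setLIntegral_ball_le R hsq.symm.lt hh).trans (by gcongr)
      _ = VR := by rw [mul_one, ← ENNReal.rpow_mul, mul_one_div_cancel hq0.ne', ENNReal.rpow_one]
  have hlim := ge_of_tendsto (tendsto_volume_ball_add (k + 1) hε)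
    (eventually_nhdsWithin_of_forall hbound)
  have hV0 : V ≠ 0 := (measure_ball_pos _ _ hε).ne'
  have hV : V ≠ ∞ := measure_ball_lt_top.ne
  rw [← ENNReal.mul_le_mul_iff_right hV0 hV, mul_one]
  refine le_of_eq_of_le ?_ hlim
  ring

theorem curveModulus_mul_measureModulus_le_one (hsq : s.HolderConjugate q) (hε : 0 < ε)
    (hsep : ∀ S ∈ 𝒮, Separates A B ε S) :
    hausdorffConst k *
        measureModulus (volume.restrict (ball 0 M)) s ((μH[(k : ℝ)]).restrict '' 𝒮) ^ (1 / s) *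
      curveModulus q (curveJoin A B G) ^ (1 / q) ≤ 1 := by
  have hc0 := coe_hausdorffConst_ne_zero k
  rw [← ENNReal.le_inv_iff_mul_le, ENNReal.mul_le_iff_le_inv hc0 ENNReal.coe_ne_top]
  refine ENNReal.le_of_forall_nnreal_lt fun r hr => ?_
  rw [one_div, ENNReal.lt_rpow_inv_iff hsq.pos] at hr
  rw [← ENNReal.mul_le_iff_le_inv hc0 ENNReal.coe_ne_top, ENNReal.le_inv_iff_mul_le]
  exact mul_curveModulus_rpow_le_one hsq hε hsep hr.le

end CurveSurfaceDuality

section SphericalFamilies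

lemma holderConjugate_div_sub {t p : ℝ} (ht : 0 < t) (htp : t < p) :
    (p / t).HolderConjugate (p / (p - t)) := by
  have hpt : p - t ≠ 0 := (sub_pos.2 htp).ne'
  have hp : p ≠ 0 := (ht.trans htp).ne'
  refine Real.holderConjugate_iff.2 ⟨(one_lt_div ht).2 htp, ?_⟩
  field_simp [hpt, hp]
  ring

lemma lintegral_rpow_rpow_div_le {X : Type*} [MeasurableSpace X] (μ : Measure X) {t p : ℝ}
    (ht : 0 < t) (htp : t < p) {ρ Q : X → ℝ≥0∞} (hρ : Measurable ρ) (hQ : Measurable Q) :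
    (∫⁻ x, ρ x ^ t ∂μ) ^ (p / t) / (∫⁻ x, Q x ^ (t / (p - t)) ∂μ) ^ (1 / (t / (p - t))) ≤
      ∫⁻ x, ρ x ^ p / Q x ∂μ := by
  have hpt : 0 < p - t := sub_pos.2 htp
  have hp : 0 < p := ht.trans htp
  have hα : 0 < t / (p - t) := div_pos ht hpt
  rcases eq_or_ne (∫⁻ x, Q x ^ (t / (p - t)) ∂μ) ∞ with hB | hB
  · rw [hB, ENNReal.top_rpow_of_pos (one_div_pos.2 hα), ENNReal.div_top]
    exact zero_le
  rcases eq_or_ne (∫⁻ x, ρ x ^ p / Q x ∂μ) ∞ with hA | hA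
  · exact hA ▸ le_top
  have hρQ : Measurable fun x => ρ x ^ p / Q x := (hρ.pow_const p).div hQ
  have hfactor : ∀ᵐ x ∂μ, ρ x ^ t = (ρ x ^ p / Q x) ^ (t / p) * Q x ^ (t / p) := by
    filter_upwards [ae_lt_top hρQ hA, ae_lt_top (hQ.pow_const _) hB] with x hxA hxB
    have hQx : Q x ≠ ∞ := ((ENNReal.rpow_lt_top_iff_of_pos hα).1 hxB).ne
    rcases eq_or_ne (Q x) 0 with hQ0 | hQ0
    · have hρ0 : ρ x = 0 := by
        by_contra hne
        simp [hQ0, ENNReal.div_zero, hne, hp.not_gt] at hxA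
      simp [hρ0, hQ0, ht, div_pos ht hp]
    · rw [← ENNReal.mul_rpow_of_nonneg _ _ (by positivity), ENNReal.div_mul_cancel hQ0 hQx,
        ← ENNReal.rpow_mul, mul_div_cancel₀ _ hp.ne']
  have holder := ENNReal.lintegral_mul_le_Lp_mul_Lq μ (holderConjugate_div_sub ht htp)
    (hρQ.pow_const (t / p)).aemeasurable (hQ.pow_const (t / p)).aemeasurable
  simp only [Pi.mul_apply, ← ENNReal.rpow_mul, show t / p * (p / t) = 1 by field_simp,
    show t / p * (p / (p - t)) = t / (p - t) by field_simp, ENNReal.rpow_one] at holder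
  refine ENNReal.div_le_of_le_mul ?_
  rw [lintegral_congr_ae hfactor]
  refine (ENNReal.rpow_le_rpow holder (by positivity)).trans_eq ?_
  rw [ENNReal.mul_rpow_of_nonneg _ _ (by positivity), ← ENNReal.rpow_mul, ← ENNReal.rpow_mul,
    show 1 / (p / t) * (p / t) = 1 by field_simp,
    show 1 / (p / (p - t)) * (p / t) = 1 / (t / (p - t)) by field_simp, ENNReal.rpow_one]

variable {k : ℕ} {D : Set (Eucl (k + 1))} {x₀ : Eucl (k + 1)} {a b p : ℝ}
  {ρ Q : Eucl (k + 1) → ℝ≥0∞}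

lemma sphere_subset_ringA {n : ℕ} (x₀ : Eucl n) {r : ℝ} (hr : r ∈ Ioo a b) :
    sphere x₀ r ⊆ ringA x₀ a b := fun x hx => by
  rwa [← mem_sphere.1 hx] at hr

lemma sphNorm_eq {r : ℝ} (hD : sphere x₀ r ⊆ D) (α : ℝ) :
    sphNorm D x₀ Q α r = (∫⁻ x in sphere x₀ r, Q x ^ α ∂μH[(k : ℝ)]) ^ (1 / α) := by
  rw [sphNorm, inter_eq_right.2 hD, Nat.cast_add, Nat.cast_one, add_sub_cancel_right]

lemma aemeasurable_lintegral_sphere (x₀ : Eucl (k + 1)) (ha : 0 ≤ a) (b : ℝ)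
    {F : Eucl (k + 1) → ℝ≥0∞} (hF : Measurable F) :
    AEMeasurable (fun r => ∫⁻ x in sphere x₀ r, F x ∂μH[(k : ℝ)]) (volume.restrict (Ioo a b)) := by
  have : IsFiniteMeasure ((μH[(k : ℝ)] : Measure (Eucl (k + 1))).restrict (sphere 0 1)) :=
    isFiniteMeasure_restrict.2 (hausdorffMeasure_sphere_lt_top 0 one_pos).ne
  have hpolar : Measurable fun r : ℝ => ENNReal.ofReal (r ^ k) *
      ∫⁻ ω in sphere 0 1, F (x₀ + r • ω) ∂μH[(k : ℝ)] :=
    (by fun_prop : Measurable fun r : ℝ => ENNReal.ofReal (r ^ k)).mul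
      (Measurable.lintegral_prod_right (f := fun r ω => F (x₀ + r • ω)) (hF.comp (by fun_prop)))
  refine ⟨_, hpolar, ?_⟩
  filter_upwards [ae_restrict_mem measurableSet_Ioo] with r hr
  exact lintegral_sphere x₀ (ha.trans_lt hr.1) hF

lemma aemeasurable_sphNorm (ha : 0 ≤ a) (hD : ringA x₀ a b ⊆ D) (hQ : Measurable Q) (α : ℝ) :
    AEMeasurable (sphNorm D x₀ Q α) (volume.restrict (Ioo a b)) :=
  ((aemeasurable_lintegral_sphere x₀ ha b (hQ.pow_const α)).pow_const (1 / α)).congr <|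
    (ae_restrict_mem measurableSet_Ioo).mono fun _ hr =>
      (sphNorm_eq ((sphere_subset_ringA x₀ hr).trans hD) α).symm

theorem lintegral_rpow_div_sphNorm_le (hk : 0 < k) (hp : k < p) (ha : 0 ≤ a)
    (hD : ringA x₀ a b ⊆ D) (hρ : Measurable ρ) (hQ : Measurable Q) :
    ∫⁻ r in Ioo a b, (∫⁻ x in sphere x₀ r, ρ x ^ k ∂μH[(k : ℝ)]) ^ (p / k) /
        sphNorm D x₀ Q (k / (p - k)) r ≤
      hausdorffConst k * ∫⁻ x in ringA x₀ a b, ρ x ^ p / Q x := by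
  refine le_trans (setLIntegral_mono' measurableSet_Ioo fun r hr => ?_)
    (lintegral_lintegral_sphere_le x₀ ha b ((hρ.pow_const p).div hQ))
  rw [sphNorm_eq ((sphere_subset_ringA x₀ hr).trans hD)]
  simpa only [ENNReal.rpow_natCast] using
    lintegral_rpow_rpow_div_le (μH[(k : ℝ)].restrict (sphere x₀ r)) (Nat.cast_pos.2 hk) hp hρ hQ

lemma inv_le_rpow_div {u v : ℝ≥0∞} {s : ℝ} (hu : 1 ≤ u) (hs : 0 < s) : v⁻¹ ≤ u ^ s / v := by
  rw [← one_div]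
  gcongr
  exact ENNReal.one_le_rpow hu hs

lemma Surface.sint_eq_setLIntegral {n m : ℕ} (S : Surface n m) (hS : InjOn S.toFun S.dom)
    (hm : MeasurableSet (S.toFun '' S.dom)) (ρ : Eucl n → ℝ≥0∞) :
    S.sint ρ = ∫⁻ y in S.toFun '' S.dom, ρ y ∂μH[(m : ℝ)] := by
  rw [← lintegral_indicator hm]
  refine lintegral_congr fun y => ?_
  by_cases hy : y ∈ S.toFun '' S.dom
  · obtain ⟨x, hx, rfl⟩ := hy
    have hfiber : S.dom ∩ S.toFun ⁻¹' {S.toFun x} = {x} :=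
      eq_singleton_iff_unique_mem.2 ⟨⟨hx, rfl⟩, fun z hz => hS hz.1 hx hz.2⟩
    simp [Surface.mult, hfiber, mem_image_of_mem _ hx]
  · have hfiber : S.dom ∩ S.toFun ⁻¹' {y} = ∅ :=
      eq_empty_of_forall_notMem fun z hz => hy ⟨z, hz.1, hz.2⟩
    simp [Surface.mult, hfiber, hy]

lemma exists_mem_sphereFam_sint_eq {I : Set ℝ} {r : ℝ} (hrI : r ∈ I) (hr : 0 < r)
    (hD : sphere x₀ r ⊆ D) : ∃ S ∈ sphereFam D x₀ I, ∀ ρ : Eucl (k + 1) → ℝ≥0∞,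
      S.sint ρ = ∫⁻ x in sphere x₀ r, ρ x ∂μH[(k : ℝ)] := by
  have e := onePointEquivSphereOfFinrankEq (ι := Fin (k + 1)) (V := Eucl k) (by simp)
  have hcont : Continuous fun x => x₀ + r • (e x : Eucl (k + 1)) := by
    have := e.continuous
    fun_prop
  have hinj : Function.Injective fun x => x₀ + r • (e x : Eucl (k + 1)) := fun x y h =>
    e.injective (Subtype.ext (smul_right_injective _ hr.ne' (add_left_cancel h)))
  have hrange : (fun x => x₀ + r • (e x : Eucl (k + 1))) '' univ = sphere x₀ r := by
    have hunit : range (fun x => (e x : Eucl (k + 1))) = sphere 0 1 :=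
      (e.surjective.range_comp Subtype.val).trans Subtype.range_coe
    calc (fun x => x₀ + r • (e x : Eucl (k + 1))) '' univ
        = (fun ω => x₀ + r • ω) '' range (fun x => (e x : Eucl (k + 1))) := by
          rw [image_univ, ← range_comp]; rfl
      _ = sphere x₀ r := (congrArg _ hunit).trans (image_affinity_sphere x₀ hr)
  set S : Surface (k + 1) k := ⟨univ, isOpen_univ, _, hcont.continuousOn⟩
  have himage : S.toFun '' S.dom = sphere x₀ r := hrange
  refine ⟨S, ⟨r, hrI, univ_nonempty, hinj.injOn, himage.trans (inter_eq_left.2 hD).symm⟩,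
    fun ρ => ?_⟩
  have hsint := S.sint_eq_setLIntegral hinj.injOn (himage ▸ isClosed_sphere.measurableSet) ρ
  rwa [himage] at hsint

lemma lintegral_indicator_inv_sphNorm_le (hk : 0 < k) (hp : k < p) (ha : 0 ≤ a)
    (hD : ringA x₀ a b ⊆ D) (F : Eucl (k + 1) → ℝ≥0∞) :
    ∫⁻ r in Ioo a b, {r | ∫⁻ x in sphere x₀ r, F x ∂μH[(k : ℝ)] < 1}.indicator
        (fun r => (sphNorm D x₀ 1 (k / (p - k)) r)⁻¹) r ≤
      hausdorffConst k * surfModulus p k {S ∈ sphereFam D x₀ (Ioo a b) | ¬ 1 ≤ S.sint F} := by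
  rw [← ENNReal.div_le_iff' (coe_hausdorffConst_ne_zero k) ENNReal.coe_ne_top]
  refine le_iInf₂ fun σ hσ => ENNReal.div_le_of_le_mul' ?_
  have hweighted := lintegral_rpow_div_sphNorm_le hk hp ha hD hσ.1 measurable_one
  simp only [Pi.one_apply, div_one] at hweighted
  refine le_trans (setLIntegral_mono' measurableSet_Ioo fun r hr => ?_)
    (hweighted.trans (by gcongr; exact Measure.restrict_le_self))
  refine indicator_apply_le' (fun hrF => ?_) fun _ => zero_le
  obtain ⟨S, hS, hsint⟩ := exists_mem_sphereFam_sint_eq hr (ha.trans_lt hr.1)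
    ((sphere_subset_ringA x₀ hr).trans hD)
  have hone := hσ.2 S ⟨hS, by rw [hsint]; exact not_le.2 hrF⟩
  rw [hsint] at hone
  exact inv_le_rpow_div hone (holderConjugate_div_sub (Nat.cast_pos.2 hk) hp).pos

theorem ae_one_le_lintegral_sphere_of_mem_extAdm (hk : 0 < k) (hp : k < p) (ha : 0 ≤ a)
    (hD : ringA x₀ a b ⊆ D) (hρ : ρ ∈ extAdm p k (sphereFam D x₀ (Ioo a b))) :
    ∀ᵐ r ∂volume.restrict (Ioo a b), 1 ≤ ∫⁻ x in sphere x₀ r, ρ x ^ k ∂μH[(k : ℝ)] := by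
  obtain ⟨hρm, hmod⟩ := hρ
  set N := {r | ∫⁻ x in sphere x₀ r, ρ x ^ k ∂μH[(k : ℝ)] < 1}
  set w : ℝ → ℝ≥0∞ := fun r => (sphNorm D x₀ 1 (k / (p - k)) r)⁻¹
  have hα : 0 < k / (p - k) := div_pos (Nat.cast_pos.2 hk) (sub_pos.2 hp)
  have hwm : AEMeasurable (N.indicator w) (volume.restrict (Ioo a b)) :=
    (aemeasurable_sphNorm ha hD measurable_one _).inv.indicator₀ (nullMeasurableSet_lt
      (aemeasurable_lintegral_sphere x₀ ha b (hρm.pow_const k)) aemeasurable_const)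
  have hzero : ∫⁻ r in Ioo a b, N.indicator w r = 0 := by
    refine le_antisymm ?_ zero_le
    rw [← mul_zero (hausdorffConst k : ℝ≥0∞), ← hmod]
    exact lintegral_indicator_inv_sphNorm_le hk hp ha hD fun x => ρ x ^ k
  filter_upwards [(lintegral_eq_zero_iff' hwm).1 hzero, ae_restrict_mem measurableSet_Ioo]
    with r hr hrI
  by_contra hrN
  rw [indicator_of_mem (show r ∈ N from not_le.1 hrN), Pi.zero_apply, ENNReal.inv_eq_zero,
    sphNorm_eq ((sphere_subset_ringA x₀ hrI).trans hD)] at hr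
  simp only [Pi.one_apply, ENNReal.one_rpow, setLIntegral_one] at hr
  exact ENNReal.rpow_ne_top_of_nonneg (one_div_pos.2 hα).le
    (hausdorffMeasure_sphere_lt_top x₀ (ha.trans_lt hrI.1)).ne hr

theorem lintegral_inv_sphNorm_le (hk : 0 < k) (hp : k < p) (ha : 0 ≤ a)
    (hD : ringA x₀ a b ⊆ D) (hQ : Measurable Q) :
    ∫⁻ r in Ioo a b, (sphNorm D x₀ Q (k / (p - k)) r)⁻¹ ≤ hausdorffConst k *
      ⨅ ρ ∈ extAdm p k (sphereFam D x₀ (Ioo a b)), ∫⁻ x in ringA x₀ a b, ρ x ^ p / Q x := by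
  rw [← ENNReal.div_le_iff' (coe_hausdorffConst_ne_zero k) ENNReal.coe_ne_top]
  refine le_iInf₂ fun ρ hρ => ENNReal.div_le_of_le_mul' ?_
  refine le_trans (lintegral_mono_ae ?_) (lintegral_rpow_div_sphNorm_le hk hp ha hD hρ.1 hQ)
  filter_upwards [ae_one_le_lintegral_sphere_of_mem_extAdm hk hp ha hD hρ] with r hr
  exact inv_le_rpow_div hr (holderConjugate_div_sub (Nat.cast_pos.2 hk) hp).pos

end SphericalFamilies

section ImageSpheres

lemma closedBall_subset_of_lt_infEDist_frontier {X : Type*} [NormedAddCommGroup X]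
    [NormedSpace ℝ X] {D : Set X} (hD : IsOpen D) {x₀ : X} (hx₀ : x₀ ∈ D) {r : ℝ} (hr : 0 ≤ r)
    (hrD : ENNReal.ofReal r < infEDist x₀ (frontier D)) : closedBall x₀ r ⊆ D := by
  by_contra hsub
  obtain ⟨y, hy, hyD⟩ := exists_mem_frontier_of_isPreconnected
    (convex_closedBall x₀ r).isPreconnected hD ⟨x₀, mem_closedBall_self hr, hx₀⟩ hsub
  refine (hrD.trans_le (infEDist_le_edist_of_mem hyD)).not_ge ?_
  rw [edist_dist, dist_comm]
  exact ENNReal.ofReal_le_ofReal hy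

lemma IsHomeoOn.isCompact_image {n : ℕ} {f : Eucl n → Eucl n} {D D' : Set (Eucl n)}
    (hf : IsHomeoOn f D D') {K : Set (Eucl n)} (hK : IsCompact K) (hKD : K ⊆ D) :
    IsCompact (f '' K) :=
  hK.image_of_continuousOn (hf.continuousOn.mono hKD)

lemma IsHomeoOn.frontier_image_ball_subset {n : ℕ} {f : Eucl n → Eucl n} {D D' : Set (Eucl n)}
    (hf : IsHomeoOn f D D') {x₀ : Eucl n} {r : ℝ} (hD : closedBall x₀ r ⊆ D) :
    frontier (f '' ball x₀ r) ⊆ f '' sphere x₀ r := by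
  have hclosed := (hf.isCompact_image (isCompact_closedBall x₀ r) hD).isClosed
  rw [(hf.isOpenMapOn _ (ball_subset_closedBall.trans hD) isOpen_ball).frontier_eq]
  rintro y ⟨hyclosure, hy⟩
  obtain ⟨x, hx, rfl⟩ := closure_minimal (image_mono ball_subset_closedBall) hclosed hyclosure
  exact ⟨x, hx.antisymm (not_lt.1 fun hlt => hy (mem_image_of_mem f hlt)), rfl⟩

theorem IsHomeoOn.exists_separates_image_sphere {k : ℕ}
    {f : Eucl (k + 1) → Eucl (k + 1)} {D D' : Set (Eucl (k + 1))} (hf : IsHomeoOn f D D')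
    {x₀ : Eucl (k + 1)} {r₁ r₂ a b : ℝ} (ha : r₁ < a) (hab : a < b) (hb : b < r₂)
    (hD : closedBall x₀ r₂ ⊆ D) : ∃ ε > 0, ∀ r ∈ Ioo a b,
      Separates (f '' sphere x₀ r₁) (f '' sphere x₀ r₂) ε (f '' sphere x₀ r) := by
  have hDr : ∀ r ≤ r₂, closedBall x₀ r ⊆ D := fun r hr =>
    (closedBall_subset_closedBall hr).trans hD
  have hopen : ∀ r ≤ r₂, IsOpen (f '' ball x₀ r) := fun r hr =>
    hf.isOpenMapOn _ (ball_subset_closedBall.trans (hDr r hr)) isOpen_ball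
  have hcompact : ∀ r ≤ r₂, IsCompact (f '' sphere x₀ r) := fun r hr =>
    hf.isCompact_image (isCompact_sphere x₀ r) (sphere_subset_closedBall.trans (hDr r hr))
  have hinner : f '' sphere x₀ r₁ ⊆ f '' ball x₀ a :=
    image_mono fun _ hx => mem_ball.2 (hx.trans_lt ha)
  have houter : f '' sphere x₀ r₂ ⊆ (f '' closedBall x₀ b)ᶜ := by
    rintro _ ⟨x, hx, rfl⟩ ⟨y, hy, hyx⟩
    obtain rfl := hf.injOn (hDr b hb.le hy) (hD (sphere_subset_closedBall hx)) hyx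
    exact (hb.trans_eq hx.symm).not_ge hy
  obtain ⟨ε₁, hε₁, hthick₁⟩ := (hcompact r₁ (by linarith)).exists_thickening_subset_open
    (hopen a (by linarith)) hinner
  obtain ⟨ε₂, hε₂, hthick₂⟩ := (hcompact r₂ le_rfl).exists_thickening_subset_open
    (hf.isCompact_image (isCompact_closedBall x₀ b) (hDr b hb.le)).isClosed.isOpen_compl houter
  refine ⟨min ε₁ ε₂, lt_min hε₁ hε₂, fun r hr =>
    ⟨(hcompact r (hr.2.trans hb).le).measurableSet, f '' ball x₀ r, hopen r (hr.2.trans hb).le,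
      hf.frontier_image_ball_subset (hDr r (hr.2.trans hb).le), ?_, ?_⟩⟩
  · exact (thickening_mono (min_le_left _ _) _).trans
      (hthick₁.trans (image_mono (ball_subset_ball hr.1.le)))
  · exact disjoint_compl_left.mono ((thickening_mono (min_le_right _ _) _).trans hthick₂)
      (image_mono (ball_subset_closedBall.trans (closedBall_subset_closedBall hr.2.le)))

variable {k : ℕ} {D : Set (Eucl (k + 1))} {f : Eucl (k + 1) → Eucl (k + 1)} {x₀ : Eucl (k + 1)}
  {a b p : ℝ}

lemma exists_sint_eq_of_mem_imageFam (hf : ContinuousOn f D) (hinj : InjOn f D)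
    (hD : ringA x₀ a b ⊆ D) {S : Surface (k + 1) k}
    (hS : S ∈ imageFam f (sphereFam D x₀ (Ioo a b))) :
    ∃ r ∈ Ioo a b, ∀ ρ, S.sint ρ = ∫⁻ y in f '' sphere x₀ r, ρ y ∂μH[(k : ℝ)] := by
  obtain ⟨S₀, ⟨r, hr, -, hS₀inj, hS₀im⟩, hdom, hEqOn⟩ := hS
  have hsphere : sphere x₀ r ⊆ D := (sphere_subset_ringA x₀ hr).trans hD
  rw [inter_eq_left.2 hsphere] at hS₀im
  have himage : S.toFun '' S.dom = f '' sphere x₀ r := by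
    rw [hdom, hEqOn.image_eq, image_comp, hS₀im]
  have hSinj : InjOn S.toFun S.dom := hdom ▸
    (hinj.comp hS₀inj (mapsTo_iff_image_subset.2 (hS₀im ▸ hsphere))).congr hEqOn.symm
  refine ⟨r, hr, fun ρ => ?_⟩
  rw [S.sint_eq_setLIntegral hSinj, himage]
  exact himage ▸ ((isCompact_sphere x₀ r).image_of_continuousOn (hf.mono hsphere)).measurableSet

theorem surfModulus_imageFam_le (hk : 0 < k) (hp : 0 < p) (hf : ContinuousOn f D)
    (hinj : InjOn f D) (hD : ringA x₀ a b ⊆ D) {M : ℝ} (hM : f '' ringA x₀ a b ⊆ ball 0 M) :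
    surfModulus p k (imageFam f (sphereFam D x₀ (Ioo a b))) ≤
      measureModulus (volume.restrict (ball 0 M)) (p / k)
        ((μH[(k : ℝ)]).restrict '' ((fun r => f '' sphere x₀ r) '' Ioo a b)) := by
  have hk' : (0 : ℝ) < k := Nat.cast_pos.2 hk
  refine le_iInf₂ fun σ hσ => ?_
  set τ := (ball (0 : Eucl (k + 1)) M).indicator σ
  have hτ : Measurable τ := hσ.1.indicator measurableSet_ball
  have hpow : ∀ y, (τ y ^ (1 / (k : ℝ))) ^ k = τ y := fun y => by
    rw [← ENNReal.rpow_natCast, ← ENNReal.rpow_mul, one_div_mul_cancel hk'.ne', ENNReal.rpow_one]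
  calc surfModulus p k (imageFam f (sphereFam D x₀ (Ioo a b)))
      ≤ ∫⁻ y, (τ y ^ (1 / (k : ℝ))) ^ p := by
        refine iInf₂_le _ ⟨hτ.pow_const _, fun S hS => ?_⟩
        obtain ⟨r, hr, hsint⟩ := exists_sint_eq_of_mem_imageFam hf hinj hD hS
        have hball : f '' sphere x₀ r ⊆ ball 0 M :=
          (image_mono (sphere_subset_ringA x₀ hr)).trans hM
        simp only [hpow, hsint]
        rw [setLIntegral_indicator measurableSet_ball, inter_eq_right.2 hball]
        exact hσ.2 _ ⟨_, ⟨r, hr, rfl⟩, rfl⟩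
    _ = ∫⁻ y in ball 0 M, σ y ^ (p / k) := by
        rw [← lintegral_indicator measurableSet_ball]
        refine lintegral_congr fun y => ?_
        rw [← ENNReal.rpow_mul, one_div_mul_eq_div]
        simp [τ, indicator_apply, ite_pow, div_pos hp hk']

end ImageSpheres

section Conclusion

lemma le_rpow_neg_of_mul_rpow_mul_rpow_le_one {s q : ℝ} (hsq : s.HolderConjugate q)
    {c I J M : ℝ≥0∞} (hc : 1 ≤ c) (hI : I ≤ c * J) (h : c * J ^ (1 / s) * M ^ (1 / q) ≤ 1) :
    M ≤ I ^ (-(q / s)) := by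
  have hs : 0 < 1 / s := one_div_pos.2 hsq.pos
  have hq : 0 < q := hsq.symm.pos
  have hcs : c ^ (1 / s) ≤ c := by
    simpa using ENNReal.rpow_le_rpow_of_exponent_le hc ((div_le_one hsq.pos).2 hsq.lt.le)
  have hIM : I ^ (1 / s) * M ^ (1 / q) ≤ 1 :=
    calc I ^ (1 / s) * M ^ (1 / q) ≤ (c * J) ^ (1 / s) * M ^ (1 / q) := by gcongr
      _ ≤ c * J ^ (1 / s) * M ^ (1 / q) := by
        rw [ENNReal.mul_rpow_of_nonneg _ _ hs.le]
        gcongr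
      _ ≤ 1 := h
  rw [ENNReal.rpow_neg, ENNReal.le_inv_iff_mul_le]
  calc M * I ^ (q / s) = (I ^ (1 / s) * M ^ (1 / q)) ^ q := by
        rw [ENNReal.mul_rpow_of_nonneg _ _ hq.le, ← ENNReal.rpow_mul, ← ENNReal.rpow_mul,
          one_div_mul_cancel hq.ne', ENNReal.rpow_one, one_div_mul_eq_div, mul_comm]
    _ ≤ 1 := ENNReal.rpow_le_one hIM hq.le

lemma tendsto_setLIntegral_Ioo {r₁ r₂ : ℝ} {g : ℝ → ℝ≥0∞}
    (hg : AEMeasurable g (volume.restrict (Ioo r₁ r₂))) :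
    Tendsto (fun δ => ∫⁻ r in Ioo (r₁ + δ) (r₂ - δ), g r) (𝓝[>] 0)
      (𝓝 (∫⁻ r in Ioo r₁ r₂, g r)) := by
  have hlim : Tendsto (fun δ : ℝ => (r₁ + δ, r₂ - δ)) (𝓝[>] 0) (𝓝 (r₁, r₂)) := by
    have hcont : Continuous fun δ : ℝ => (r₁ + δ, r₂ - δ) := by fun_prop
    simpa using (hcont.tendsto 0).mono_left nhdsWithin_le_nhds
  have hcover := aecover_Ioo_of_Ioo (μ := volume) hlim.fst_nhds hlim.snd_nhds
  refine (hcover.lintegral_tendsto_of_countably_generated hg).congr' ?_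
  filter_upwards [self_mem_nhdsWithin] with δ (hδ : 0 < δ)
  rw [Measure.restrict_restrict_of_subset (Ioo_subset_Ioo (by linarith) (by linarith))]

variable {k : ℕ} {D D' : Set (Eucl (k + 1))} {f : Eucl (k + 1) → Eucl (k + 1)}
  {x₀ : Eucl (k + 1)} {Q : Eucl (k + 1) → ℝ≥0∞} {p r₁ r₂ : ℝ} {d₀ : ℝ≥0∞}

lemma ringA_subset_closedBall {n : ℕ} (x₀ : Eucl n) {a b r : ℝ} (hb : b ≤ r) :
    ringA x₀ a b ⊆ closedBall x₀ r := fun _ hx => mem_closedBall.2 (hx.2.le.trans hb)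

theorem curveModulus_image_sphere_le_of_Ioo (hk : 0 < k) (hp : k < p) (hQ : Measurable Q)
    (hf : IsHomeoOn f D D') (hlow : IsLowerQHomeoAt D f Q p x₀ d₀) (hr₁ : 0 ≤ r₁)
    (hr₂ : ENNReal.ofReal r₂ < d₀) (hD : closedBall x₀ r₂ ⊆ D) {a b : ℝ} (ha : r₁ < a)
    (hab : a < b) (hb : b < r₂) (G : Set (Eucl (k + 1))) :
    curveModulus (p / (p - k)) (curveJoin (f '' sphere x₀ r₁) (f '' sphere x₀ r₂) G) ≤
      (∫⁻ r in Ioo a b, (sphNorm D x₀ Q (k / (p - k)) r)⁻¹) ^ (-(k / (p - k))) := by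
  have hk' : (0 : ℝ) < k := Nat.cast_pos.2 hk
  have hring : ringA x₀ a b ⊆ closedBall x₀ r₂ := ringA_subset_closedBall x₀ hb.le
  obtain ⟨ε, hε, hsep⟩ := hf.exists_separates_image_sphere ha hab hb hD
  obtain ⟨M, hM⟩ :=
    (hf.isCompact_image (isCompact_closedBall x₀ r₂) hD).isBounded.subset_ball 0
  have hmod : ∫⁻ r in Ioo a b, (sphNorm D x₀ Q (k / (p - k)) r)⁻¹ ≤ hausdorffConst k *
      measureModulus (volume.restrict (ball 0 M)) (p / k)
        ((μH[(k : ℝ)]).restrict '' ((fun r => f '' sphere x₀ r) '' Ioo a b)) := by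
    refine (lintegral_inv_sphNorm_le hk hp (hr₁.trans ha.le) (hring.trans hD) hQ).trans ?_
    gcongr
    exact (hlow a b (hr₁.trans_lt ha) hab ((ENNReal.ofReal_le_ofReal hb.le).trans_lt hr₂)).trans
      (surfModulus_imageFam_le hk (hk'.trans hp) hf.continuousOn hf.injOn (hring.trans hD)
        ((image_mono hring).trans hM))
  have hexp : p / (p - k) / (p / k) = k / (p - k) := by
    have : p ≠ 0 := (hk'.trans hp).ne'
    field_simp
  rw [← hexp]
  exact le_rpow_neg_of_mul_rpow_mul_rpow_le_one (holderConjugate_div_sub hk' hp)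
    (one_le_coe_hausdorffConst k) (hexp ▸ hmod)
    (curveModulus_mul_measureModulus_le_one (holderConjugate_div_sub hk' hp) hε
      (forall_mem_image.2 hsep))

theorem curveModulus_image_sphere_le (hk : 0 < k) (hp : k < p) (hQ : Measurable Q)
    (hf : IsHomeoOn f D D') (hlow : IsLowerQHomeoAt D f Q p x₀ d₀) (hr₁ : 0 ≤ r₁)
    (hr₁₂ : r₁ < r₂) (hr₂ : ENNReal.ofReal r₂ < d₀) (hD : closedBall x₀ r₂ ⊆ D)
    (G : Set (Eucl (k + 1))) :
    curveModulus (p / (p - k)) (curveJoin (f '' sphere x₀ r₁) (f '' sphere x₀ r₂) G) ≤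
      (∫⁻ r in Ioo r₁ r₂, (sphNorm D x₀ Q (k / (p - k)) r)⁻¹) ^ (-(k / (p - k))) := by
  have hlim := tendsto_setLIntegral_Ioo (aemeasurable_sphNorm hr₁
    ((ringA_subset_closedBall x₀ le_rfl).trans hD) hQ (k / (p - k))).inv
  refine ge_of_tendsto ((ENNReal.continuous_rpow_const.tendsto _).comp hlim) ?_
  filter_upwards [Ioo_mem_nhdsGT (half_pos (sub_pos.2 hr₁₂))] with δ hδ
  exact curveModulus_image_sphere_le_of_Ioo hk hp hQ hf hlow hr₁ hr₂ hD (by linarith [hδ.1])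
    (by linarith [hδ.2]) (by linarith [hδ.1]) G

end Conclusion

theorem stmt_5_general (n : ℕ) (hn : 2 ≤ n) (D : Set (Eucl n)) (hD : IsOpen D) (x₀ : Eucl n)
    (hx₀ : x₀ ∈ D) (Q : Eucl n → ℝ≥0∞) (hQ : Measurable Q) (p : ℝ) (hp : (n : ℝ) - 1 < p)
    (f : Eucl n → Eucl n) (hf : IsHomeoOn f D (f '' D))
    (hlow : IsLowerQHomeoAt D f Q p x₀ (infEDist x₀ (frontier D))) (r₁ r₂ : ℝ) (hr₁ : 0 ≤ r₁)
    (hr₁₂ : r₁ < r₂) (hr₂ : ENNReal.ofReal r₂ < infEDist x₀ (frontier D)) :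
    curveModulus (p / (p - (n : ℝ) + 1))
        (curveJoin (f '' sphere x₀ r₁) (f '' sphere x₀ r₂) (f '' D)) ≤
      (∫⁻ r in Ioo r₁ r₂, (sphNorm D x₀ Q (((n : ℝ) - 1) / (p - (n : ℝ) + 1)) r)⁻¹)
        ^ (-(((n : ℝ) - 1) / (p - (n : ℝ) + 1))) := by
  obtain ⟨k, rfl⟩ : ∃ k, n = k + 1 := ⟨n - 1, by omega⟩
  have hcast : ((k + 1 : ℕ) : ℝ) - 1 = k := by push_cast; ring
  have hexp : p - ((k + 1 : ℕ) : ℝ) + 1 = p - k := by push_cast; ring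
  rw [hcast] at hp
  rw [hcast, hexp]
  exact curveModulus_image_sphere_le (by omega) hp hQ hf hlow hr₁ hr₁₂ hr₂
    (closedBall_subset_of_lt_infEDist_frontier hD hx₀ (hr₁.trans hr₁₂.le) hr₂) (f '' D)

/-- if `f` is a lower `Q`-homeomorphism at `x₀ ∈ D` w.r.t. the `p`-modulus,
`p > n-1`, then for `0 < r₁ < r₂ < dist(x₀, ∂D)` the `p/(p-n+1)`-modulus of the family of
curves joining `f(S₁)` and `f(S₂)` in `f(D)` is bounded by
`(∫_{r₁}^{r₂} dr/‖Q‖_{(n-1)/(p-n+1)}(r))^{-(n-1)/(p-n+1)}`. -/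
theorem stmt_5 (n : ℕ) (hn : 2 ≤ n) (D : Set (Eucl n))
    (hDopen : IsOpen D) (hDconn : IsConnected D)
    (x₀ : Eucl n) (hx₀ : x₀ ∈ D)
    (Q : Eucl n → ℝ) (hQmeas : Measurable Q) (hQpos : ∀ x ∈ D, 0 < Q x)
    (p : ℝ) (hp : (n : ℝ) - 1 < p)
    (f : Eucl n → Eucl n) (hf : IsHomeoOn f D (f '' D))
    (hlow : IsLowerQHomeoAt D f (fun x => ENNReal.ofReal (Q x)) p x₀
      (EMetric.infEdist x₀ (frontier D)))
    (r₁ r₂ : ℝ) (hr₁ : 0 < r₁) (hr₁₂ : r₁ < r₂)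
    (hr₂ : ENNReal.ofReal r₂ < EMetric.infEdist x₀ (frontier D)) :
    curveModulus (p / (p - (n:ℝ) + 1))
        (curveJoin (f '' sphere x₀ r₁) (f '' sphere x₀ r₂) (f '' D)) ≤
      (∫⁻ r in Ioo r₁ r₂,
          (sphNorm D x₀ (fun x => ENNReal.ofReal (Q x)) (((n:ℝ)-1)/(p-(n:ℝ)+1)) r)⁻¹)
        ^ (-(((n:ℝ)-1)/(p-(n:ℝ)+1))) := by
  exact stmt_5_general n hn D hDopen x₀ hx₀ _ hQmeas.ennreal_ofReal p hp f hf hlow r₁ r₂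
    hr₁.le hr₁₂ hr₂
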